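/- arXiv:math/0301217 — 3 statements merged into one kernel-verified Lean document; each statement's English description precedes it below -/
import Mathlib

section
/- (Polynomial spreading lemma.) For every δ_0 > 0, every c_0 ∈ (0,1) and every ε > 0 there exists κ = κ(δ_0, ε, c_0) > 0 with the following property. Let n be a positive integer, let P be a real polynomial of degree ≤ n with sup_{x∈[-1,1]} |P(x)| ≤ 1, let δ ≥ δ_0, let c satisfy c_0 ≤ c < 1 and 0 < ε < (1−c)/(2−c), let E ⊂ [-1,1] be a measurable set with 0 < |E| < κ such that sup_{x∈E} |P(x)| ≤ e^{-δ n}, and let I be an interval with E ⊂ I ⊂ [-1,1] and |I| ≤ |E|^{1/(2−c)+ε}. Then sup_{x∈I} |P(x)| ≤ e^{-c δ n}. -/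
open MeasureTheory Set

/-!
Let `|E| = exp (-L)`, so that an interval `I` with `|I| ≤ |E| ^ (c + ε)` has length at most
`exp (-(c + ε) * L)`. Interpolate `P` at `p + 1` points of `E` with gaps of at least
`|E| / (p + 1)`. Because of the spacing, the interpolant is at most
`exp (-δ * n) * (exp 4 * |I| / |E|) ^ p` on `I`. The interpolation error is controlled by the
derivative of order `p + 1` of `P`. Among polynomials bounded by `1` on an interval, the Chebyshev
polynomial has the largest derivatives at an endpoint, and rescaling bounds the error by
`(exp 2 * (n / (p + 1)) ^ 2 * |I|) ^ (p + 1)`. For `p` close to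
`(1 - c - ε / 2) * δ * n / (4 + (1 - c - ε) * L)` both terms are smaller than `exp (-c * δ * n)` as
soon as `L` is large, since `(n / (p + 1)) ^ 2` is only of order `L ^ 2`, which `exp (ε * L / 4)`
absorbs. The exponent of the spreading lemma is admissible because `c ≤ 1 / (2 - c)`.
-/

open Polynomial
open scoped Nat

section ChebyshevMarkov

theorem iterate_derivative_comp_C_mul_X_add_C {R : Type*} [CommSemiring R] (p : R[X]) (a b : R)
    (k : ℕ) :
    derivative^[k] (p.comp (C a * X + C b)) =
      C (a ^ k) * (derivative^[k] p).comp (C a * X + C b) := by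
  induction k with
  | zero => simp
  | succ k ih =>
    simp only [Function.iterate_succ_apply', ih, derivative_comp, derivative_add, derivative_mul,
      derivative_C, derivative_X, pow_succ, C_mul]
    ring

theorem eval_iterate_derivative_T_one_nonneg (n k : ℕ) :
    0 ≤ (derivative^[k] (Chebyshev.T ℝ n)).eval 1 := by
  simpa using Chebyshev.eval_iterate_derivative_le_of_forall_abs_le_one (n := n) (k := k)
    (P := 0) le_rfl (by simp) (by simp)

theorem factorial_two_mul_mul_eval_iterate_derivative_T_one_le (n k : ℕ) :
    (2 * k)! * (derivative^[k] (Chebyshev.T ℝ n)).eval 1 ≤ k ! * (2 * n ^ 2 : ℝ) ^ k := by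
  induction k with
  | zero => simp
  | succ k ih =>
    have hrec := Chebyshev.iterate_derivative_T_eval_one_recurrence (R := ℝ) n k
    have hstep : (2 * k + 1) * (derivative^[k + 1] (Chebyshev.T ℝ n)).eval 1 ≤
        (n : ℝ) ^ 2 * (derivative^[k] (Chebyshev.T ℝ n)).eval 1 := by
      rw [hrec, Int.cast_natCast]
      gcongr
      · exact eval_iterate_derivative_T_one_nonneg n k
      · linarith [sq_nonneg (k : ℝ)]
    calc ((2 * (k + 1))! : ℝ) * (derivative^[k + 1] (Chebyshev.T ℝ n)).eval 1
        = 2 * (k + 1) * (2 * k)! *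
            ((2 * k + 1) * (derivative^[k + 1] (Chebyshev.T ℝ n)).eval 1) := by
          rw [mul_add_one, Nat.factorial_succ, Nat.factorial_succ]; push_cast; ring
      _ ≤ 2 * (k + 1) * (2 * k)! *
            ((n : ℝ) ^ 2 * (derivative^[k] (Chebyshev.T ℝ n)).eval 1) := by gcongr
      _ = 2 * (k + 1) * n ^ 2 * ((2 * k)! * (derivative^[k] (Chebyshev.T ℝ n)).eval 1) := by ring
      _ ≤ 2 * (k + 1) * n ^ 2 * (k ! * (2 * n ^ 2 : ℝ) ^ k) := by gcongr
      _ = (k + 1)! * (2 * n ^ 2 : ℝ) ^ (k + 1) := by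
          rw [Nat.factorial_succ]; push_cast; ring

theorem two_pow_mul_eval_iterate_derivative_T_one_le (n k : ℕ) :
    2 ^ k * (derivative^[k] (Chebyshev.T ℝ n)).eval 1 ≤
      k ! * (Real.exp 2 * (n / k : ℝ) ^ 2) ^ k := by
  rcases Nat.eq_zero_or_pos k with rfl | hk
  · simp
  have hpow : ((2 * k : ℕ) : ℝ) ^ (2 * k) ≤ Real.exp 2 ^ k * (2 * k)! := by
    rw [← div_le_iff₀ (by positivity), ← Real.exp_nat_mul, mul_comm (k : ℝ)]
    exact_mod_cast Real.pow_div_factorial_le_exp (2 * k : ℕ) (by positivity) (2 * k)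
  refine le_of_mul_le_mul_left ?_ (show (0 : ℝ) < (2 * k)! by positivity)
  calc ((2 * k)! : ℝ) * (2 ^ k * (derivative^[k] (Chebyshev.T ℝ n)).eval 1)
      = 2 ^ k * ((2 * k)! * (derivative^[k] (Chebyshev.T ℝ n)).eval 1) := by ring
    _ ≤ 2 ^ k * (k ! * (2 * n ^ 2 : ℝ) ^ k) :=
        mul_le_mul_of_nonneg_left
          (factorial_two_mul_mul_eval_iterate_derivative_T_one_le n k) (by positivity)
    _ = k ! * ((n / k : ℝ) ^ 2) ^ k * ((2 * k : ℕ) : ℝ) ^ (2 * k) := by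
        rw [pow_mul, mul_left_comm, mul_assoc, ← mul_pow, ← mul_pow]
        congr 2
        push_cast
        field_simp
    _ ≤ k ! * ((n / k : ℝ) ^ 2) ^ k * (Real.exp 2 ^ k * (2 * k)!) := by gcongr
    _ = (2 * k)! * (k ! * (Real.exp 2 * (n / k : ℝ) ^ 2) ^ k) := by rw [mul_pow]; ring

variable {n : ℕ} {P : ℝ[X]}

theorem abs_eval_one_iterate_derivative_le (hdeg : P.natDegree ≤ n)
    (hP : ∀ x ∈ Icc (-1 : ℝ) 1, |P.eval x| ≤ 1) (k : ℕ) :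
    |(derivative^[k] P).eval 1| ≤ (derivative^[k] (Chebyshev.T ℝ n)).eval 1 := by
  refine abs_le'.mpr ⟨?_, ?_⟩
  · exact Chebyshev.eval_iterate_derivative_le_of_forall_abs_le_one le_rfl
      (natDegree_le_iff_degree_le.mp hdeg) hP
  · simpa using Chebyshev.eval_iterate_derivative_le_of_forall_abs_le_one (P := -P) (k := k) le_rfl
      (by rw [degree_neg]; exact natDegree_le_iff_degree_le.mp hdeg) (by simpa using hP)

theorem abs_sub_pow_mul_abs_eval_iterate_derivative_le {u v : ℝ} (hdeg : P.natDegree ≤ n)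
    (hP : ∀ x ∈ uIcc u v, |P.eval x| ≤ 1) (k : ℕ) :
    |v - u| ^ k * |(derivative^[k] P).eval v| ≤
      2 ^ k * (derivative^[k] (Chebyshev.T ℝ n)).eval 1 := by
  set Q := P.comp (C ((v - u) / 2) * X + C ((u + v) / 2))
  have hQdeg : Q.natDegree ≤ n :=
    natDegree_comp_le.trans <|
      (Nat.mul_le_mul hdeg natDegree_linear_le).trans_eq (mul_one n)
  have hQ : ∀ y ∈ Icc (-1 : ℝ) 1, |Q.eval y| ≤ 1 := by
    intro y hy
    have hmem : (v - u) / 2 * y + (u + v) / 2 ∈ uIcc u v := by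
      rw [← segment_eq_uIcc]
      exact ⟨(1 - y) / 2, (1 + y) / 2, by linarith [hy.2], by linarith [hy.1], by ring,
        by simp only [smul_eq_mul]; ring⟩
    simpa [Q] using hP _ hmem
  have hend : (derivative^[k] Q).eval 1 = ((v - u) / 2) ^ k * (derivative^[k] P).eval v := by
    simp only [Q, iterate_derivative_comp_C_mul_X_add_C, eval_mul, eval_C, eval_comp, eval_add,
      eval_X]
    congr 2
    ring
  have hmarkov := abs_eval_one_iterate_derivative_le hQdeg hQ k
  rw [hend, abs_mul, abs_pow, abs_div, abs_two, div_pow, div_mul_eq_mul_div,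
    div_le_iff₀ (by positivity)] at hmarkov
  linarith

theorem abs_eval_iterate_derivative_le_of_mem_Icc (hdeg : P.natDegree ≤ n)
    (hP : ∀ x ∈ Icc (-1 : ℝ) 1, |P.eval x| ≤ 1) (k : ℕ) {x : ℝ} (hx : x ∈ Icc (-1 : ℝ) 1) :
    |(derivative^[k] P).eval x| ≤ k ! * (Real.exp 2 * (n / k : ℝ) ^ 2) ^ k := by
  obtain ⟨u, hu, hxu⟩ : ∃ u ∈ Icc (-1 : ℝ) 1, 1 ≤ |x - u| := by
    rcases le_total 0 x with h | h
    · exact ⟨-1, by simp, le_abs.mpr (.inl (by linarith))⟩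
    · exact ⟨1, by simp, le_abs.mpr (.inr (by linarith))⟩
  calc |(derivative^[k] P).eval x| ≤ |x - u| ^ k * |(derivative^[k] P).eval x| :=
        le_mul_of_one_le_left (abs_nonneg _) (one_le_pow₀ hxu)
    _ ≤ 2 ^ k * (derivative^[k] (Chebyshev.T ℝ n)).eval 1 :=
        abs_sub_pow_mul_abs_eval_iterate_derivative_le hdeg
          (fun y hy => hP y (uIcc_subset_Icc hu hx hy)) k
    _ ≤ k ! * (Real.exp 2 * (n / k : ℝ) ^ 2) ^ k :=
        two_pow_mul_eval_iterate_derivative_T_one_le n k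

end ChebyshevMarkov

section InterpolationError

variable {s : Set ℝ}

theorem exists_finset_isRoot_derivative_of_isRoot (hs : s.OrdConnected) {p : ℝ[X]} {S : Finset ℝ}
    (hSs : ↑S ⊆ s) (hS : ∀ x ∈ S, p.IsRoot x) :
    ∃ S' : Finset ℝ, ↑S' ⊆ s ∧ S.card ≤ S'.card + 1 ∧ ∀ x ∈ S', p.derivative.IsRoot x := by
  classical
  by_cases hp : derivative p = 0
  · exact ⟨S, hSs, Nat.le_succ _, fun x _ => by simp [hp]⟩
  refine ⟨p.derivative.roots.toFinset.filter (· ∈ s),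
    fun x hx => (Finset.mem_filter.mp hx).2, ?_, by simp +contextual⟩
  refine Finset.card_le_of_interleaved fun x hx y hy hxy _ => ?_
  obtain ⟨z, hz, hz'⟩ := exists_deriv_eq_zero hxy p.continuousOn ((hS x hx).trans (hS y hy).symm)
  have hzs : z ∈ s := hs.out (hSs hx) (hSs hy) (Ioo_subset_Icc_self hz)
  exact ⟨z, by simpa [hp, hzs] using hz', hz⟩

theorem exists_isRoot_iterate_derivative (hs : s.OrdConnected) {k : ℕ} {p : ℝ[X]} {S : Finset ℝ}
    (hSs : ↑S ⊆ s) (hS : ∀ x ∈ S, p.IsRoot x) (hk : k < S.card) :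
    ∃ ξ ∈ s, (derivative^[k] p).IsRoot ξ := by
  induction k generalizing p S with
  | zero =>
    obtain ⟨x, hx⟩ := Finset.card_pos.mp hk
    exact ⟨x, hSs hx, hS x hx⟩
  | succ k ih =>
    obtain ⟨S', hS's, hcard, hS'⟩ := exists_finset_isRoot_derivative_of_isRoot hs hSs hS
    exact ih hS's hS' (by lia)

theorem iterate_derivative_natDegree_of_monic {R : Type*} [CommSemiring R] {p : R[X]}
    (hp : p.Monic) : derivative^[p.natDegree] p = C (p.natDegree ! : R) := by
  have hdeg := natDegree_iterate_derivative p p.natDegree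
  rw [Nat.sub_self, Nat.le_zero] at hdeg
  rw [eq_C_of_natDegree_eq_zero hdeg, coeff_iterate_derivative, zero_add, hp.coeff_natDegree,
    Nat.descFactorial_self, nsmul_one]

theorem exists_eval_sub_eval_interpolate_eq {ι : Type*} [DecidableEq ι] (hs : s.OrdConnected)
    {t : Finset ι} {v : ι → ℝ} (hv : InjOn v t) (hvs : ∀ i ∈ t, v i ∈ s) (P : ℝ[X]) {x : ℝ}
    (hx : x ∈ s) :
    ∃ ξ ∈ s, P.eval x - (Lagrange.interpolate t v fun i => P.eval (v i)).eval x =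
      (derivative^[t.card] P).eval ξ / t.card ! * (Lagrange.nodal t v).eval x := by
  set Q := Lagrange.interpolate t v fun i => P.eval (v i)
  set N := Lagrange.nodal t v
  by_cases hxv : ∃ i ∈ t, v i = x
  · obtain ⟨i, hi, rfl⟩ := hxv
    refine ⟨v i, hx, ?_⟩
    rw [Lagrange.eval_interpolate_at_node _ hv hi, Lagrange.eval_nodal_at_node hi, sub_self,
      mul_zero]
  push Not at hxv
  have hNx : N.eval x ≠ 0 := Lagrange.eval_nodal_not_at_node fun i hi => (hxv i hi).symm
  set lam := (P.eval x - Q.eval x) / N.eval x with hlam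
  have hroots : ∀ y ∈ insert x (t.image v), (P - Q - C lam * N).IsRoot y := by
    intro y hy
    simp only [IsRoot.def, eval_sub, eval_mul, eval_C]
    rcases Finset.mem_insert.mp hy with rfl | hy
    · rw [hlam, div_mul_cancel₀ _ hNx, sub_self]
    · obtain ⟨i, hi, rfl⟩ := Finset.mem_image.mp hy
      rw [Lagrange.eval_interpolate_at_node _ hv hi, Lagrange.eval_nodal_at_node hi, sub_self,
        mul_zero, sub_zero]
  obtain ⟨ξ, hξ, hroot⟩ := exists_isRoot_iterate_derivative (k := t.card) hs
    (by simpa [insert_subset_iff, hx] using show ↑t ⊆ v ⁻¹' s from hvs) hroots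
    (by rw [Finset.card_insert_of_notMem (by simpa using hxv), Finset.card_image_of_injOn hv]; lia)
  have hQ : derivative^[t.card] Q = 0 :=
    iterate_derivative_eq_zero_of_degree_lt (Lagrange.degree_interpolate_lt _ hv)
  have hN : derivative^[t.card] N = C (t.card ! : ℝ) := by
    simpa [N] using iterate_derivative_natDegree_of_monic (Lagrange.nodal_monic (s := t) (v := v))
  simp only [IsRoot.def, iterate_derivative_sub, iterate_derivative_C_mul, hQ, hN, eval_sub,
    eval_mul, eval_C, sub_zero] at hroot
  refine ⟨ξ, hξ, ?_⟩
  rw [sub_eq_zero.mp hroot, mul_div_cancel_right₀ _ (by positivity), hlam, div_mul_cancel₀ _ hNx]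

theorem abs_eval_sub_eval_interpolate_le {ι : Type*} [DecidableEq ι] {a b : ℝ} {t : Finset ι}
    {v : ι → ℝ} (hv : InjOn v t) (hvI : ∀ i ∈ t, v i ∈ Icc a b) {P : ℝ[X]} {B : ℝ}
    (hB : ∀ ξ ∈ Icc a b, |(derivative^[t.card] P).eval ξ| ≤ t.card ! * B) {x : ℝ}
    (hx : x ∈ Icc a b) :
    |P.eval x - (Lagrange.interpolate t v fun i => P.eval (v i)).eval x| ≤
      B * (b - a) ^ t.card := by
  obtain ⟨ξ, hξ, heq⟩ := exists_eval_sub_eval_interpolate_eq ordConnected_Icc hv hvI P hx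
  have hcoeff : |(derivative^[t.card] P).eval ξ / t.card !| ≤ B := by
    rw [abs_div, Nat.abs_cast, div_le_iff₀' (by positivity)]
    exact hB ξ hξ
  have hnodal : |(Lagrange.nodal t v).eval x| ≤ (b - a) ^ t.card := by
    rw [Lagrange.eval_nodal, Finset.abs_prod, ← Finset.prod_const]
    exact Finset.prod_le_prod (fun _ _ => abs_nonneg _) fun i hi =>
      Real.dist_le_of_mem_Icc hx (hvI i hi)
  rw [heq, abs_mul]
  exact mul_le_mul hcoeff hnodal (abs_nonneg _) ((abs_nonneg _).trans hcoeff)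

end InterpolationError

/-- The points `v 0, …, v k` increase with gaps of at least `h`; the values `v i` with `k < i` are
unconstrained. Such points serve as interpolation nodes. -/
def SpacedBy (h : ℝ) (k : ℕ) (v : ℕ → ℝ) : Prop :=
  ∀ i < k, v i + h ≤ v (i + 1)

namespace SpacedBy

variable {h : ℝ} {k : ℕ} {v : ℕ → ℝ}

theorem natCast_sub_mul_le_sub (hv : SpacedBy h k v) {i j : ℕ} (hij : i ≤ j) (hj : j ≤ k) :
    ((j : ℝ) - i) * h ≤ v j - v i := by
  induction j, hij using Nat.le_induction with
  | base => simp
  | succ j _ ih =>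
    have hgap := hv j hj
    have hprev := ih (Nat.le_of_succ_le hj)
    push_cast
    linarith

theorem abs_natCast_sub_mul_le_abs_sub (hv : SpacedBy h k v) {i j : ℕ} (hi : i ≤ k) (hj : j ≤ k) :
    |(i : ℝ) - j| * h ≤ |v i - v j| := by
  wlog hij : i ≤ j generalizing i j
  · rw [abs_sub_comm, abs_sub_comm (v i)]
    exact this hj hi (le_of_not_ge hij)
  rw [abs_sub_comm, abs_sub_comm (v i), abs_of_nonneg (sub_nonneg.mpr (Nat.cast_le.mpr hij))]
  exact (hv.natCast_sub_mul_le_sub hij hj).trans (le_abs_self _)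

theorem injOn (hv : SpacedBy h k v) (hh : 0 < h) : InjOn v (Finset.range (k + 1)) := by
  intro i hi j hj hij
  have hle := hv.abs_natCast_sub_mul_le_abs_sub (Nat.lt_succ_iff.mp (Finset.mem_range.mp hi))
    (Nat.lt_succ_iff.mp (Finset.mem_range.mp hj))
  rw [hij, sub_self, abs_zero] at hle
  exact_mod_cast sub_eq_zero.mp (abs_nonpos_iff.mp (nonpos_of_mul_nonpos_left hle hh))

end SpacedBy

theorem exists_mem_volume_le_add_inter_Ici {E : Set ℝ} (hE : BddBelow E) (hne : E.Nonempty)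
    (h : ℝ) {η : ℝ} (hη : 0 < η) :
    ∃ x ∈ E, volume E ≤ ENNReal.ofReal (h + η) + volume (E ∩ Ici (x + h)) := by
  obtain ⟨x, hxE, hx⟩ := exists_lt_of_csInf_lt hne (lt_add_of_pos_right (sInf E) hη)
  have hcover : E ⊆ Icc (sInf E) (x + h) ∪ E ∩ Ici (x + h) := fun y hy =>
    (le_total y (x + h)).imp (fun hyx => ⟨csInf_le hE hy, hyx⟩) fun hyx => ⟨hy, hyx⟩
  refine ⟨x, hxE, (measure_mono hcover).trans ((measure_union_le _ _).trans ?_)⟩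
  rw [Real.volume_Icc]
  gcongr
  linarith

theorem exists_spacedBy_forall_mem {E : Set ℝ} (hE : BddBelow E) {h : ℝ} (hh : 0 ≤ h) {k : ℕ}
    (hvol : ENNReal.ofReal (k * h) < volume E) :
    ∃ v, SpacedBy h k v ∧ ∀ i ≤ k, v i ∈ E := by
  induction k generalizing E with
  | zero =>
    obtain ⟨x, hx⟩ := nonempty_of_measure_ne_zero hvol.ne_bot
    exact ⟨fun _ => x, by simp [SpacedBy], fun _ _ => hx⟩
  | succ k ih =>
    obtain ⟨η, hη, hηE⟩ := ENNReal.lt_iff_exists_add_pos_lt.mp hvol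
    obtain ⟨x, hxE, hx⟩ := exists_mem_volume_le_add_inter_Ici hE
      (nonempty_of_measure_ne_zero hvol.ne_bot) h (NNReal.coe_pos.mpr hη)
    have hrest : ENNReal.ofReal (k * h) < volume (E ∩ Ici (x + h)) := by
      refine lt_of_add_lt_add_left (a := ENNReal.ofReal (h + η)) ?_
      calc ENNReal.ofReal (h + η) + ENNReal.ofReal (k * h)
          = ENNReal.ofReal (h + η + k * h) :=
            (ENNReal.ofReal_add (by positivity) (by positivity)).symm
        _ = ENNReal.ofReal ((k + 1 : ℕ) * h) + η := by
            rw [← ENNReal.ofReal_coe_nnreal, ← ENNReal.ofReal_add (by positivity) η.coe_nonneg]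
            push_cast
            ring_nf
        _ < volume E := hηE
        _ ≤ ENNReal.ofReal (h + η) + volume (E ∩ Ici (x + h)) := hx
    obtain ⟨v, hv, hvE⟩ := ih (hE.mono inter_subset_left) hrest
    refine ⟨fun i => Nat.casesOn i x v, ?_, ?_⟩
    · rintro (_ | i) hi
      · exact (hvE 0 (Nat.zero_le k)).2
      · exact hv i (Nat.lt_of_succ_lt_succ hi)
    · rintro (_ | i) hi
      · exact hxE
      · exact (hvE i (Nat.le_of_succ_le_succ hi)).1

theorem prod_range_erase_abs_sub {k i : ℕ} (hi : i ≤ k) :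
    ∏ j ∈ (Finset.range (k + 1)).erase i, |(i : ℝ) - j| = i ! * (k - i)! := by
  obtain ⟨d, rfl⟩ := Nat.exists_eq_add_of_le hi
  have hsplit : (Finset.range (i + d + 1)).erase i =
      Finset.range i ∪ Finset.Ico (i + 1) (i + 1 + d) := by
    ext j
    simp only [Finset.mem_erase, Finset.mem_range, Finset.mem_union, Finset.mem_Ico]
    lia
  have hdisj : Disjoint (Finset.range i) (Finset.Ico (i + 1) (i + 1 + d)) := by
    rw [Finset.range_eq_Ico]
    exact (Finset.Ico_disjoint_Ico_consecutive 0 i _).mono_right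
      (Finset.Ico_subset_Ico_left (Nat.le_succ i))
  rw [hsplit, Finset.prod_union hdisj, Nat.add_sub_cancel_left]
  congr 1
  · rw [← Finset.prod_range_reflect, ← Finset.prod_range_add_one_eq_factorial, Nat.cast_prod]
    refine Finset.prod_congr rfl fun j hj => ?_
    have hji : i = i - 1 - j + (j + 1) := by have := Finset.mem_range.mp hj; lia
    rw [abs_of_nonneg (sub_nonneg.mpr (Nat.cast_le.mpr (by lia))), sub_eq_iff_eq_add']
    exact_mod_cast hji
  · rw [Finset.prod_Ico_eq_prod_range, Nat.add_sub_cancel_left,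
      ← Finset.prod_range_add_one_eq_factorial, Nat.cast_prod]
    refine Finset.prod_congr rfl fun j _ => ?_
    rw [abs_sub_comm, abs_of_nonneg (sub_nonneg.mpr (Nat.cast_le.mpr (by lia)))]
    push_cast
    ring

section LagrangeBound

variable {a b h : ℝ} {k : ℕ} {v : ℕ → ℝ}

theorem SpacedBy.abs_eval_lagrangeBasis_le (hv : SpacedBy h k v) (hh : 0 < h)
    (hvI : ∀ i ≤ k, v i ∈ Icc a b) {i : ℕ} (hi : i ≤ k) {x : ℝ} (hx : x ∈ Icc a b) :
    |(Lagrange.basis (Finset.range (k + 1)) v i).eval x| ≤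
      ((b - a) / h) ^ k / (i ! * (k - i)!) := by
  have hcard : ((Finset.range (k + 1)).erase i).card = k := by
    rw [Finset.card_erase_of_mem (Finset.mem_range.mpr (Nat.lt_add_one_of_le hi)),
      Finset.card_range, Nat.add_sub_cancel]
  have hconst : ((b - a) / h) ^ k = ∏ _j ∈ (Finset.range (k + 1)).erase i, (b - a) / h := by
    rw [Finset.prod_const, hcard]
  rw [Lagrange.basis, eval_prod, Finset.abs_prod, ← prod_range_erase_abs_sub hi, hconst,
    ← Finset.prod_div_distrib]
  refine Finset.prod_le_prod (fun _ _ => abs_nonneg _) fun j hj => ?_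
  obtain ⟨hji, hj⟩ := Finset.mem_erase.mp hj
  have hjk : j ≤ k := Nat.lt_succ_iff.mp (Finset.mem_range.mp hj)
  have hpos : 0 < |(i : ℝ) - j| := abs_pos.mpr (sub_ne_zero.mpr (Nat.cast_injective.ne hji.symm))
  simp only [Lagrange.basisDivisor, eval_mul, eval_C, eval_sub, eval_X, abs_mul, abs_inv]
  rw [div_div, inv_mul_eq_div]
  have hdist : |x - v j| ≤ b - a := Real.dist_le_of_mem_Icc hx (hvI j hjk)
  exact div_le_div₀ ((abs_nonneg _).trans hdist) hdist (by positivity)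
    (by rw [mul_comm]; exact hv.abs_natCast_sub_mul_le_abs_sub hi hjk)

theorem SpacedBy.abs_eval_interpolate_le (hv : SpacedBy h k v) (hh : 0 < h)
    (hvI : ∀ i ≤ k, v i ∈ Icc a b) {r : ℕ → ℝ} {A : ℝ} (hr : ∀ i ≤ k, |r i| ≤ A) {x : ℝ}
    (hx : x ∈ Icc a b) :
    |(Lagrange.interpolate (Finset.range (k + 1)) v r).eval x| ≤
      A * ((2 * ((b - a) / h)) ^ k / k !) := by
  have hA : 0 ≤ A := (abs_nonneg _).trans (hr 0 (Nat.zero_le k))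
  have hle {i : ℕ} (hi : i ∈ Finset.range (k + 1)) : i ≤ k :=
    Nat.lt_succ_iff.mp (Finset.mem_range.mp hi)
  rw [Lagrange.interpolate_apply, eval_finsetSum]
  refine (Finset.abs_sum_le_sum_abs _ _).trans ?_
  calc ∑ i ∈ Finset.range (k + 1), |(C (r i) * Lagrange.basis (Finset.range (k + 1)) v i).eval x|
      ≤ ∑ i ∈ Finset.range (k + 1), A * (((b - a) / h) ^ k / (i ! * (k - i)!)) := by
        refine Finset.sum_le_sum fun i hi => ?_
        rw [eval_mul, eval_C, abs_mul]
        exact mul_le_mul (hr i (hle hi)) (hv.abs_eval_lagrangeBasis_le hh hvI (hle hi) hx)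
          (abs_nonneg _) hA
    _ = ∑ i ∈ Finset.range (k + 1), A * (((b - a) / h) ^ k / k !) * k.choose i := by
        refine Finset.sum_congr rfl fun i hi => ?_
        rw [Nat.cast_choose ℝ (hle hi)]
        field_simp
    _ = A * ((2 * ((b - a) / h)) ^ k / k !) := by
        rw [← Finset.mul_sum, ← Nat.cast_sum, Nat.sum_range_choose, mul_pow]
        push_cast
        ring

end LagrangeBound

theorem two_mul_add_one_mul_pow_div_factorial_le {r : ℝ} (hr : 0 ≤ r) (p : ℕ) :
    (2 * ((p + 1) * r)) ^ p / p ! ≤ (Real.exp 4 * r) ^ p := by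
  rcases Nat.eq_zero_or_pos p with rfl | hp
  · simp
  have hp1 : (1 : ℝ) ≤ p := Nat.one_le_cast.mpr hp
  have hexp : (2 * (p + 1) : ℝ) ^ p / p ! ≤ Real.exp 4 ^ p :=
    calc (2 * (p + 1) : ℝ) ^ p / p ! ≤ Real.exp (2 * (p + 1)) :=
          Real.pow_div_factorial_le_exp _ (by positivity) p
      _ ≤ Real.exp (p * 4) := Real.exp_le_exp.mpr (by linarith)
      _ = Real.exp 4 ^ p := Real.exp_nat_mul _ _
  rw [← mul_assoc, mul_pow _ r, mul_pow _ r, mul_div_right_comm]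
  exact mul_le_mul_of_nonneg_right hexp (by positivity)

theorem abs_eval_le_of_abs_eval_le_on {n : ℕ} {P : ℝ[X]} (hdeg : P.natDegree ≤ n)
    (hP : ∀ x ∈ Icc (-1 : ℝ) 1, |P.eval x| ≤ 1) {E : Set ℝ} {A : ℝ} (hA : ∀ x ∈ E, |P.eval x| ≤ A)
    (hE0 : 0 < volume.real E) {a b : ℝ} (hE : E ⊆ Icc a b) (hI : Icc a b ⊆ Icc (-1 : ℝ) 1) (p : ℕ)
    {x : ℝ} (hx : x ∈ Icc a b) :
    |P.eval x| ≤ A * (Real.exp 4 * ((b - a) / volume.real E)) ^ p +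
      (Real.exp 2 * (n / (p + 1) : ℝ) ^ 2 * (b - a)) ^ (p + 1) := by
  set h := volume.real E / (p + 1)
  have hh : 0 < h := by positivity
  have hvol : ENNReal.ofReal (p * h) < volume E := by
    refine (ENNReal.ofReal_lt_iff_lt_toReal (by positivity) ?_).mpr ?_
    · exact ((measure_mono hE).trans_lt measure_Icc_lt_top).ne
    · rw [mul_div_assoc', div_lt_iff₀ (by positivity), mul_comm]
      exact mul_lt_mul_of_pos_left (lt_add_one _) hE0
  obtain ⟨v, hv, hvE⟩ := exists_spacedBy_forall_mem (bddBelow_Icc.mono hE) hh.le hvol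
  set Q := Lagrange.interpolate (Finset.range (p + 1)) v fun i => P.eval (v i)
  have hQ : |Q.eval x| ≤ A * (Real.exp 4 * ((b - a) / volume.real E)) ^ p := by
    refine (hv.abs_eval_interpolate_le hh (fun i hi => hE (hvE i hi))
      (fun i hi => hA _ (hvE i hi)) hx).trans ?_
    have hA0 : 0 ≤ A := (abs_nonneg _).trans (hA _ (hvE 0 (Nat.zero_le p)))
    have hab : 0 ≤ b - a := sub_nonneg.mpr (hx.1.trans hx.2)
    have hh' : (b - a) / h = (p + 1) * ((b - a) / volume.real E) := by
      rw [div_div_eq_mul_div]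
      ring
    rw [hh']
    exact mul_le_mul_of_nonneg_left (two_mul_add_one_mul_pow_div_factorial_le (by positivity) p) hA0
  have herr : |P.eval x - Q.eval x| ≤
      (Real.exp 2 * (n / (p + 1) : ℝ) ^ 2 * (b - a)) ^ (p + 1) := by
    have hder := fun ξ (hξ : ξ ∈ Icc a b) =>
      abs_eval_iterate_derivative_le_of_mem_Icc hdeg hP (p + 1) (hI hξ)
    have hinterp := abs_eval_sub_eval_interpolate_le (hv.injOn hh)
      (fun i hi => hE (hvE i (Nat.lt_succ_iff.mp (Finset.mem_range.mp hi))))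
      (by rwa [Finset.card_range]) hx
    rwa [Finset.card_range, ← mul_pow, Nat.cast_add_one] at hinterp
  calc |P.eval x| = |Q.eval x + (P.eval x - Q.eval x)| := by rw [add_sub_cancel]
    _ ≤ |Q.eval x| + |P.eval x - Q.eval x| := abs_add_le _ _
    _ ≤ _ := add_le_add hQ herr

section Numerics

variable {c ε L t : ℝ}

theorem exists_nat_interpolation_degree (hε : 0 < ε) (hc : 0 < c) (hcε : c + ε ≤ 1)
    (hL : 8 ≤ ε * L) (ht : 0 < t) :
    ∃ p : ℕ, p * (4 + (1 - (c + ε)) * L) ≤ (1 - c - ε / 2) * t ∧ ε / 2 * t ≤ (p + 1) * L ∧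
      c * t ≤ (p + 1) * ((c + ε - ε / 4) * L) := by
  set D := 4 + (1 - (c + ε)) * L
  set q := 1 - c - ε / 2 with hq
  have hL0 : 0 < L := pos_of_mul_pos_right (by linarith) hε.le
  have hD0 : 0 < D := by
    have := mul_nonneg (sub_nonneg.mpr hcε) hL0.le
    positivity
  have hq0 : 0 < q := by linarith
  -- The largest `p` for which the main term `exp (-t + p * D)` is at most `exp (-(c + ε / 2) * t)`.
  obtain ⟨p, hp, hp'⟩ : ∃ p : ℕ, p * D ≤ q * t ∧ q * t ≤ (p + 1) * D :=
    ⟨⌊q * t / D⌋₊, (le_div_iff₀ hD0).mp (Nat.floor_le (by positivity)),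
      ((div_lt_iff₀ hD0).mp (Nat.lt_floor_add_one _)).le⟩
  refine ⟨p, hp, ?_, ?_⟩
  · have hDL : D ≤ L := by
      have := mul_pos hc hL0
      simp only [D]
      linarith
    calc ε / 2 * t ≤ q * t := by gcongr; linarith
      _ ≤ (p + 1) * D := hp'
      _ ≤ (p + 1) * L := by gcongr
  · have hcD : c * D ≤ q * ((c + ε - ε / 4) * L) := by
      rw [← sub_nonneg]
      calc 0 ≤ (1 - (c + ε)) * (3 / 4 * (ε * L)) + c / 2 * (ε * L - 8) + 3 / 8 * (ε ^ 2 * L) :=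
            add_nonneg (add_nonneg (mul_nonneg (sub_nonneg.mpr hcε) (by positivity))
              (mul_nonneg (by positivity) (sub_nonneg.mpr hL))) (by positivity)
        _ = q * ((c + ε - ε / 4) * L) - c * D := by
            simp only [D, hq]
            ring
    refine le_of_mul_le_mul_left ?_ hq0
    calc q * (c * t) = c * (q * t) := by ring
      _ ≤ c * ((p + 1) * D) := by gcongr
      _ = (p + 1) * (c * D) := by ring
      _ ≤ (p + 1) * (q * ((c + ε - ε / 4) * L)) := by gcongr
      _ = q * ((p + 1) * ((c + ε - ε / 4) * L)) := by ring

theorem exp_neg_mul_pow_le {δ₀ r : ℝ} {p : ℕ} (hε : 0 ≤ ε) (ht : δ₀ ≤ t) (hr0 : 0 ≤ r)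
    (hr : r ≤ Real.exp ((1 - (c + ε)) * L))
    (hp : p * (4 + (1 - (c + ε)) * L) ≤ (1 - c - ε / 2) * t) :
    Real.exp (-t) * (Real.exp 4 * r) ^ p ≤ Real.exp (-(ε / 2 * δ₀)) * Real.exp (-(c * t)) :=
  calc Real.exp (-t) * (Real.exp 4 * r) ^ p
      ≤ Real.exp (-t) * (Real.exp 4 * Real.exp ((1 - (c + ε)) * L)) ^ p := by gcongr
    _ = Real.exp (-t + p * (4 + (1 - (c + ε)) * L)) := by
        rw [← Real.exp_add, ← Real.exp_nat_mul, ← Real.exp_add]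
    _ ≤ Real.exp (-(ε / 2 * δ₀) + -(c * t)) :=
        Real.exp_le_exp.mpr (by linarith [mul_le_mul_of_nonneg_left ht hε])
    _ = Real.exp (-(ε / 2 * δ₀)) * Real.exp (-(c * t)) := Real.exp_add _ _

theorem pow_succ_le_mul_exp_neg {y ρ θ : ℝ} {p : ℕ} (hy : 0 ≤ y) (hyρ : y ≤ ρ * Real.exp (-θ))
    (hρ1 : ρ ≤ 1) (ht : t ≤ (p + 1) * θ) : y ^ (p + 1) ≤ ρ * Real.exp (-t) := by
  have hρ0 : 0 ≤ ρ := nonneg_of_mul_nonneg_left (hy.trans hyρ) (Real.exp_pos _)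
  calc y ^ (p + 1) ≤ (ρ * Real.exp (-θ)) ^ (p + 1) := by gcongr
    _ = ρ ^ (p + 1) * Real.exp (-((p + 1) * θ)) := by
        rw [mul_pow, ← Real.exp_nat_mul]
        push_cast
        ring_nf
    _ ≤ ρ * Real.exp (-t) := by
        gcongr
        exact pow_le_of_le_one hρ0 hρ1 p.succ_ne_zero

end Numerics

theorem abs_eval_le_exp_of_length_le_exp {n : ℕ} {P : ℝ[X]} (hdeg : P.natDegree ≤ n)
    (hP : ∀ x ∈ Icc (-1 : ℝ) 1, |P.eval x| ≤ 1) {δ₀ δ ε c L : ℝ} (hn : 0 < n) (hδ₀ : 0 < δ₀)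
    (hδ : δ₀ ≤ δ) (hε : 0 < ε) (hc : 0 < c) (hcε : c + ε ≤ 1) (hL : 8 ≤ ε * L)
    (hLexp : Real.exp 2 * (2 * L / (ε * δ₀)) ^ 2 ≤
      (1 - Real.exp (-(ε / 2 * δ₀))) * Real.exp (ε / 4 * L))
    {E : Set ℝ} (hvol : volume.real E = Real.exp (-L))
    (hPE : ∀ x ∈ E, |P.eval x| ≤ Real.exp (-(δ * n))) {a b : ℝ} (hE : E ⊆ Icc a b)
    (hI : Icc a b ⊆ Icc (-1 : ℝ) 1) (hlen : b - a ≤ Real.exp (-((c + ε) * L))) {x : ℝ}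
    (hx : x ∈ Icc a b) : |P.eval x| ≤ Real.exp (-(c * (δ * n))) := by
  have hn1 : (1 : ℝ) ≤ n := Nat.one_le_cast.mpr hn
  have hδn : δ₀ ≤ δ * n := hδ.trans (le_mul_of_one_le_right (hδ₀.le.trans hδ) hn1)
  obtain ⟨p, hp_main, hp_ratio, hp_error⟩ :=
    exists_nat_interpolation_degree hε hc hcε hL (hδ₀.trans_le hδn)
  set ρ := 1 - Real.exp (-(ε / 2 * δ₀)) with hρ
  have hab : 0 ≤ b - a := sub_nonneg.mpr (hx.1.trans hx.2)
  have hratio : (n / (p + 1) : ℝ) ≤ 2 * L / (ε * δ₀) := by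
    rw [div_le_div_iff₀ (by positivity) (by positivity)]
    have : ε * (δ₀ * n) ≤ ε * (δ * n) := by gcongr
    linarith
  have hmain : (b - a) / volume.real E ≤ Real.exp ((1 - (c + ε)) * L) := by
    rw [hvol, div_le_iff₀ (Real.exp_pos _), ← Real.exp_add]
    exact hlen.trans_eq (by ring_nf)
  have herror : Real.exp 2 * (n / (p + 1) : ℝ) ^ 2 * (b - a) ≤
      ρ * Real.exp (-((c + ε - ε / 4) * L)) :=
    calc Real.exp 2 * (n / (p + 1) : ℝ) ^ 2 * (b - a)
        ≤ Real.exp 2 * (2 * L / (ε * δ₀)) ^ 2 * Real.exp (-((c + ε) * L)) := by gcongr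
      _ ≤ ρ * Real.exp (ε / 4 * L) * Real.exp (-((c + ε) * L)) := by gcongr
      _ = ρ * Real.exp (-((c + ε - ε / 4) * L)) := by
          rw [mul_assoc, ← Real.exp_add]
          ring_nf
  calc |P.eval x| ≤ Real.exp (-(δ * n)) * (Real.exp 4 * ((b - a) / volume.real E)) ^ p +
        (Real.exp 2 * (n / (p + 1) : ℝ) ^ 2 * (b - a)) ^ (p + 1) :=
        abs_eval_le_of_abs_eval_le_on hdeg hP hPE (hvol ▸ Real.exp_pos _) hE hI p hx
    _ ≤ Real.exp (-(ε / 2 * δ₀)) * Real.exp (-(c * (δ * n))) +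
        ρ * Real.exp (-(c * (δ * n))) :=
        add_le_add (exp_neg_mul_pow_le hε.le hδn (by positivity) hmain hp_main)
          (pow_succ_le_mul_exp_neg (by positivity) herror
            (sub_le_self _ (Real.exp_pos _).le) hp_error)
    _ = Real.exp (-(c * (δ * n))) := by rw [← add_mul, hρ, add_sub_cancel, one_mul]

theorem eventually_exp_two_mul_sq_le {δ₀ ε : ℝ} (hδ₀ : 0 < δ₀) (hε : 0 < ε) :
    ∀ᶠ L in Filter.atTop, Real.exp 2 * (2 * L / (ε * δ₀)) ^ 2 ≤
      (1 - Real.exp (-(ε / 2 * δ₀))) * Real.exp (ε / 4 * L) := by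
  have hρ : 0 < 1 - Real.exp (-(ε / 2 * δ₀)) :=
    sub_pos.mpr (Real.exp_lt_one_iff.mpr (neg_lt_zero.mpr (by positivity)))
  have hlittleO := (isLittleO_pow_exp_pos_mul_atTop 2 (show 0 < ε / 4 by positivity)).const_mul_left
    (Real.exp 2 * (2 / (ε * δ₀)) ^ 2)
  filter_upwards [hlittleO.def hρ] with L hL
  rw [Real.norm_of_nonneg (by positivity), Real.norm_of_nonneg (Real.exp_pos _).le] at hL
  exact le_of_eq_of_le (by ring) hL

theorem polynomial_spreading_lemma_general {δ₀ ε : ℝ} (hδ₀ : 0 < δ₀) (hε : 0 < ε) :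
    ∃ κ : ℝ, 0 < κ ∧ ∀ (n : ℕ) (P : ℝ[X]), P.natDegree ≤ n →
      (∀ x ∈ Icc (-1 : ℝ) 1, |P.eval x| ≤ 1) → ∀ δ c : ℝ, δ₀ ≤ δ → c + ε ≤ 1 →
      ∀ E : Set ℝ, 0 < volume.real E → volume.real E < κ →
      (∀ x ∈ E, |P.eval x| ≤ Real.exp (-δ * n)) →
      ∀ a b : ℝ, E ⊆ Icc a b → Icc a b ⊆ Icc (-1 : ℝ) 1 → b - a ≤ volume.real E ^ (c + ε) →
      ∀ x ∈ Icc a b, |P.eval x| ≤ Real.exp (-c * δ * n) := by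
  obtain ⟨L₀, hL₀⟩ := Filter.eventually_atTop.mp
    ((Filter.eventually_ge_atTop (8 / ε)).and (eventually_exp_two_mul_sq_le hδ₀ hε))
  refine ⟨Real.exp (-L₀), Real.exp_pos _, ?_⟩
  intro n P hdeg hP δ c hδ hcε E hE0 hEκ hPE a b hE hI hlen x hx
  have hrw : -c * δ * n = -(c * (δ * n)) := by ring
  rw [hrw]
  rcases le_or_gt (c * (δ * n)) 0 with htriv | hpos
  · exact (hP x (hI hx)).trans (Real.one_le_exp (neg_nonneg.mpr htriv))
  have hδn : 0 ≤ δ * n := mul_nonneg (hδ₀.le.trans hδ) n.cast_nonneg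
  have hc : 0 < c := pos_of_mul_pos_left hpos hδn
  have hn : 0 < n := Nat.pos_of_ne_zero (by rintro rfl; simp at hpos)
  set L := -Real.log (volume.real E)
  obtain ⟨hL, hLexp⟩ := hL₀ L (le_neg_of_le_neg ((Real.log_le_iff_le_exp hE0).mpr hEκ.le))
  refine abs_eval_le_exp_of_length_le_exp hdeg hP hn hδ₀ hδ hε hc hcε ((div_le_iff₀' hε).mp hL)
    hLexp (by rw [neg_neg, Real.exp_log hE0]) (by simpa only [neg_mul] using hPE) hE hI ?_ hx
  rw [Real.rpow_def_of_pos hE0] at hlen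
  exact hlen.trans_eq (by simp only [L]; ring_nf)

theorem polynomial_spreading_lemma :
    ∀ δ₀ : ℝ, 0 < δ₀ → ∀ c₀ : ℝ, 0 < c₀ → c₀ < 1 → ∀ ε : ℝ, 0 < ε →
    ∃ κ : ℝ, 0 < κ ∧
      ∀ n : ℕ, 0 < n → ∀ P : Polynomial ℝ, P.natDegree ≤ n →
      (∀ x ∈ Set.Icc (-1:ℝ) 1, |P.eval x| ≤ 1) →
      ∀ δ : ℝ, δ₀ ≤ δ → ∀ c : ℝ, c₀ ≤ c → c < 1 → ε < (1 - c) / (2 - c) →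
      ∀ E : Set ℝ, MeasurableSet E → E ⊆ Set.Icc (-1:ℝ) 1 →
        0 < (volume E).toReal → (volume E).toReal < κ →
        (∀ x ∈ E, |P.eval x| ≤ Real.exp (-δ * n)) →
      ∀ a b : ℝ, E ⊆ Set.Icc a b → Set.Icc a b ⊆ Set.Icc (-1:ℝ) 1 →
        b - a ≤ ((volume E).toReal) ^ (1 / (2 - c) + ε) →
      ∀ x ∈ Set.Icc a b, |P.eval x| ≤ Real.exp (-c * δ * n) := by
  intro δ₀ hδ₀ _ _ _ ε hε
  obtain ⟨κ, hκ, hspread⟩ := polynomial_spreading_lemma_general hδ₀ hε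
  refine ⟨min κ 1, lt_min hκ one_pos, ?_⟩
  intro n _ P hdeg hP δ hδ c _ hc1 hεc E _ _ hE0 hEκ hPE a b hE hI hlen
  have hcε : c + ε ≤ 1 := by
    have : (1 - c) / (2 - c) ≤ 1 - c := div_le_self (by linarith) (by linarith)
    linarith
  have hexponent : c ≤ 1 / (2 - c) := by
    rw [le_div_iff₀ (by linarith)]
    linarith [sq_nonneg (c - 1)]
  exact hspread n P hdeg hP δ c hδ hcε E hE0 (hEκ.trans_le (min_le_left _ _)) hPE a b hE hI
    (hlen.trans (Real.rpow_le_rpow_of_exponent_ge hE0 (hEκ.le.trans (min_le_right _ _))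
      (by linarith)))
end

section
/- Let n be a positive integer, let P be a real polynomial of degree ≤ n with sup_{x∈[-1,1]} |P(x)| ≤ 1, let I ⊂ [-1,1] be an interval with centre x_0, let k ≥ 0 be an integer, and let T_k P(x) = Σ_{j=0}^{k} P^{(j)}(x_0) (x−x_0)^j / j! be the degree-k Taylor polynomial of P at x_0. Then sup_{x∈I} |P(x) − T_k P(x)| ≤ (1/2) · ( e |I| n² / (k+1)² )^{k+1}. -/
open Set

/-!
It suffices to bound `P⁽ᵏ⁺¹⁾` on `[-1, 1]` and insert the bound into Lagrange's form of the
remainder, where `|x - x₀| ≤ |I| / 2`.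

With `m = k + 1`, the bound needed is `m! / 2 * (2 e n² / m²) ^ m`, which is weaker than
V. A. Markov's sharp inequality by a factor exponential in `m`. For `m ≥ 2` that factor pays for an
argument through the complex plane: by Bernstein–Walsh, `|P| ≤ exp (n t)` on the filled ellipse with
foci `±1` and semi-major axis `cosh t`; this ellipse contains the disc of radius `t² / 2` around
each point of `[-1, 1]`, and Cauchy's estimate on the disc with `t = 2 m / n` gives
`m! (e² n² / (2 m²)) ^ m`. For `m = 1` this is slightly too weak. There one uses that among
polynomials bounded by `1` on an interval the Chebyshev polynomial has the largest derivative at the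
endpoints, and that each point of `[-1, 1]` is an endpoint of a subinterval of length at least `1`.
-/

open Polynomial

theorem one_add_sq_div_two_le_cosh (t : ℝ) : 1 + t ^ 2 / 2 ≤ Real.cosh t := by
  have h := sum_le_hasSum (Finset.range 2)
    (fun i _ => div_nonneg ((even_two_mul i).pow_nonneg t) (Nat.cast_nonneg _)) (Real.hasSum_cosh t)
  simpa [Finset.sum_range_succ] using h

theorem iteratedDeriv_polynomial_eval {𝕜 : Type*} [NontriviallyNormedField 𝕜] (p : 𝕜[X]) (m : ℕ) :
    iteratedDeriv m (fun x => p.eval x) = fun x => (derivative^[m] p).eval x := by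
  induction m with
  | zero => simp
  | succ m ih =>
    ext x
    rw [iteratedDeriv_succ, ih, Function.iterate_succ_apply', Polynomial.deriv]

theorem exists_eval_sub_taylor_sum_eq (P : ℝ[X]) (k : ℕ) (c x : ℝ) :
    ∃ ξ ∈ uIcc c x,
      P.eval x - ∑ j ∈ Finset.range (k + 1),
          (derivative^[j] P).eval c * (x - c) ^ j / (j.factorial : ℝ) =
        (derivative^[k + 1] P).eval ξ * (x - c) ^ (k + 1) / ((k + 1).factorial : ℝ) := by
  rcases eq_or_ne c x with rfl | hcx
  · exact ⟨c, left_mem_uIcc, by simp [Finset.sum_range_succ']⟩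
  have hP (N : ℕ) : ContDiff ℝ N (fun x => P.eval x) := by simpa using P.contDiff_aeval (𝕜 := ℝ) N
  obtain ⟨ξ, hξ, h⟩ :=
    taylor_mean_remainder_lagrange_iteratedDeriv hcx (hP (k + 1)).contDiffOn
  refine ⟨ξ, uIoo_subset_uIcc_self hξ, ?_⟩
  rw [iteratedDeriv_polynomial_eval] at h
  rw [← h, taylor_within_apply]
  congr 1
  refine Finset.sum_congr rfl fun j _ => ?_
  rw [iteratedDerivWithin_eq_iteratedDeriv (uniqueDiffOn_uIcc hcx) (hP j).contDiffAt left_mem_uIcc,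
    iteratedDeriv_polynomial_eval, smul_eq_mul]
  ring

theorem exists_eval_eq_pow_mul_eval_div {K : Type*} [Field K] {p : K[X]} {n : ℕ}
    (hn : p.natDegree ≤ n) (A B : K[X]) :
    ∃ q : K[X], ∀ x, B.eval x ≠ 0 → q.eval x = B.eval x ^ n * p.eval (A.eval x / B.eval x) := by
  refine ⟨∑ i ∈ Finset.range (n + 1), C (p.coeff i) * A ^ i * B ^ (n - i), fun x hx => ?_⟩
  rw [eval_finsetSum, eval_eq_sum_range' (Nat.lt_succ_of_le hn), Finset.mul_sum]
  refine Finset.sum_congr rfl fun i hi => ?_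
  obtain ⟨d, rfl⟩ := Nat.exists_eq_add_of_le (Finset.mem_range_succ_iff.mp hi)
  simp only [eval_mul, eval_C, eval_pow, Nat.add_sub_cancel_left, pow_add, div_pow]
  field_simp

/-- The Joukowsky map `w ↦ (w + w⁻¹) / 2`, which carries the circle of radius `exp (-t)` to the
ellipse with foci `±1` and semi-major axis `cosh t`. Its junk value at `0` is `0`. -/
noncomputable def joukowsky (w : ℂ) : ℂ := (w + w⁻¹) / 2

theorem joukowsky_eq_re {w : ℂ} (hw : ‖w‖ = 1) : joukowsky w = (w.re : ℂ) := by
  rw [joukowsky, Complex.inv_eq_conj hw, Complex.add_conj]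
  push_cast
  ring

theorem exists_joukowsky_eq (z : ℂ) : ∃ w ≠ 0, ‖w‖ ≤ 1 ∧ joukowsky w = z := by
  obtain ⟨s, hs⟩ := IsAlgClosed.exists_pow_nat_eq (z ^ 2 - 1) two_pos
  have hprod : (z + s) * (z - s) = 1 := by linear_combination -hs
  have hnorm : ‖z + s‖ * ‖z - s‖ = 1 := by rw [← norm_mul, hprod, norm_one]
  rcases le_total ‖z + s‖ 1 with h | h
  · refine ⟨z + s, left_ne_zero_of_mul_eq_one hprod, h, ?_⟩
    rw [joukowsky, inv_eq_of_mul_eq_one_right hprod]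
    ring
  · refine ⟨z - s, right_ne_zero_of_mul_eq_one hprod,
      (le_mul_of_one_le_left (norm_nonneg _) h).trans_eq hnorm, ?_⟩
    rw [joukowsky, inv_eq_of_mul_eq_one_left hprod]
    ring

theorem norm_joukowsky_sub_one_add_norm_joukowsky_add_one {w : ℂ} (hw : w ≠ 0) :
    ‖joukowsky w - 1‖ + ‖joukowsky w + 1‖ = ‖w‖ + ‖w‖⁻¹ := by
  have hsub : joukowsky w - 1 = (w - 1) ^ 2 / (2 * w) := by
    rw [joukowsky]
    field_simp
    ring
  have hadd : joukowsky w + 1 = (w + 1) ^ 2 / (2 * w) := by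
    rw [joukowsky]
    field_simp
    ring
  have hparallelogram := parallelogram_law_with_norm ℝ w 1
  have hw' : ‖w‖ ≠ 0 := norm_ne_zero_iff.mpr hw
  simp only [hsub, hadd, norm_div, norm_pow, norm_mul, Complex.norm_ofNat, norm_one]
    at hparallelogram ⊢
  field_simp
  linarith

section BernsteinWalsh

variable {n : ℕ} {P : ℂ[X]} {M : ℝ}

/- `w ^ n * P (joukowsky w)` is a polynomial in `w`, and it is bounded by `M` on the unit circle, so
the maximum principle applies. -/
theorem norm_eval_joukowsky_le (hdeg : P.natDegree ≤ n)
    (hP : ∀ x ∈ Icc (-1 : ℝ) 1, ‖P.eval (x : ℂ)‖ ≤ M) {w : ℂ} (hw₀ : w ≠ 0) (hw : ‖w‖ ≤ 1) :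
    ‖P.eval (joukowsky w)‖ ≤ M / ‖w‖ ^ n := by
  obtain ⟨Q, hQ⟩ : ∃ Q : ℂ[X], ∀ w ≠ 0, Q.eval w = w ^ n * P.eval (joukowsky w) := by
    obtain ⟨Q, hQ⟩ := exists_eval_eq_pow_mul_eval_div hdeg (C (1 / 2) * (X ^ 2 + 1)) X
    refine ⟨Q, fun w hw₀ => ?_⟩
    rw [hQ w (by simpa using hw₀), eval_X]
    congr 2
    simp only [joukowsky, eval_mul, eval_C, eval_add, eval_pow, eval_X, eval_one]
    field_simp
  have hcircle : ∀ z ∈ frontier (Metric.ball (0 : ℂ) 1), ‖Q.eval z‖ ≤ M := by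
    intro z hz
    rw [frontier_ball _ one_ne_zero, mem_sphere_zero_iff_norm] at hz
    have hz₀ : z ≠ 0 := norm_ne_zero_iff.mp (hz ▸ one_ne_zero)
    rw [hQ z hz₀, norm_mul, norm_pow, hz, one_pow, one_mul, joukowsky_eq_re hz]
    exact hP _ (abs_le.mp (hz ▸ Complex.abs_re_le_norm z))
  have hdisc : ‖Q.eval w‖ ≤ M :=
    Complex.norm_le_of_forall_mem_frontier_norm_le Metric.isBounded_ball
      Q.differentiable.diffContOnCl hcircle (by simpa [closure_ball] using hw)
  rw [hQ w hw₀, norm_mul, norm_pow] at hdisc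
  rwa [le_div_iff₀' (pow_pos (norm_pos_iff.mpr hw₀) n)]

theorem norm_eval_le_mul_exp_of_mem_ellipse (hdeg : P.natDegree ≤ n)
    (hP : ∀ x ∈ Icc (-1 : ℝ) 1, ‖P.eval (x : ℂ)‖ ≤ M) {z : ℂ} {t : ℝ} (ht : 0 ≤ t)
    (hz : ‖z - 1‖ + ‖z + 1‖ ≤ 2 * Real.cosh t) : ‖P.eval z‖ ≤ M * Real.exp (n * t) := by
  obtain ⟨w, hw₀, hw, rfl⟩ := exists_joukowsky_eq z
  have hM : 0 ≤ M := (norm_nonneg _).trans (hP 0 (by simp))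
  have hpos : 0 < ‖w‖ := norm_pos_iff.mpr hw₀
  have hlog : -Real.log ‖w‖ ≤ t := by
    have hcosh : Real.cosh (Real.log ‖w‖) ≤ Real.cosh t := by
      rw [Real.cosh_log hpos, ← norm_joukowsky_sub_one_add_norm_joukowsky_add_one hw₀]
      linarith
    rw [Real.cosh_le_cosh, abs_of_nonneg ht] at hcosh
    exact (neg_le_abs _).trans hcosh
  have hinv : ‖w‖⁻¹ ≤ Real.exp t := by
    rw [← Real.exp_log (inv_pos.mpr hpos), Real.log_inv]
    exact Real.exp_le_exp.mpr hlog
  calc ‖P.eval (joukowsky w)‖ ≤ M * ‖w‖⁻¹ ^ n := by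
        rw [inv_pow, ← div_eq_mul_inv]
        exact norm_eval_joukowsky_le hdeg hP hw₀ hw
    _ ≤ M * Real.exp t ^ n := by gcongr
    _ = M * Real.exp (n * t) := by rw [Real.exp_nat_mul]

theorem norm_sub_one_add_norm_add_one_le {y : ℝ} (hy : y ∈ Icc (-1 : ℝ) 1) (z : ℂ) :
    ‖z - 1‖ + ‖z + 1‖ ≤ 2 + 2 * ‖z - y‖ := by
  have hsub : ‖z - 1‖ ≤ ‖z - y‖ + (1 - y) := by
    have h := norm_sub_le_norm_sub_add_norm_sub z y 1
    rwa [← Complex.ofReal_one, ← Complex.ofReal_sub, Complex.norm_real, Real.norm_eq_abs,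
      abs_sub_comm, abs_of_nonneg (sub_nonneg.mpr hy.2)] at h
  have hadd : ‖z + 1‖ ≤ ‖z - y‖ + (y + 1) := by
    have h := norm_add_le (z - y) (y + 1)
    rwa [← add_assoc, sub_add_cancel, ← Complex.ofReal_one, ← Complex.ofReal_add,
      Complex.norm_real, Real.norm_eq_abs, abs_of_nonneg (by linarith [hy.1])] at h
  linarith

theorem norm_eval_iterate_derivative_le (hdeg : P.natDegree ≤ n)
    (hP : ∀ x ∈ Icc (-1 : ℝ) 1, ‖P.eval (x : ℂ)‖ ≤ M) {y : ℝ} (hy : y ∈ Icc (-1 : ℝ) 1)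
    (m : ℕ) {t : ℝ} (ht : 0 < t) :
    ‖(derivative^[m] P).eval (y : ℂ)‖ ≤
      m.factorial * (M * Real.exp (n * t)) / (t ^ 2 / 2) ^ m := by
  have hdisc : ∀ z ∈ Metric.sphere (y : ℂ) (t ^ 2 / 2), ‖P.eval z‖ ≤ M * Real.exp (n * t) := by
    intro z hz
    apply norm_eval_le_mul_exp_of_mem_ellipse hdeg hP ht.le
    have hfoci := norm_sub_one_add_norm_add_one_le hy z
    rw [mem_sphere_iff_norm.mp hz] at hfoci
    linarith [one_add_sq_div_two_le_cosh t]
  have h := Complex.norm_iteratedDeriv_le_of_forall_mem_sphere_norm_le m (by positivity)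
    P.differentiable.diffContOnCl hdisc
  rwa [iteratedDeriv_polynomial_eval] at h

theorem norm_eval_iterate_derivative_le_factorial_mul_pow (hdeg : P.natDegree ≤ n) (hn : 0 < n)
    (hP : ∀ x ∈ Icc (-1 : ℝ) 1, ‖P.eval (x : ℂ)‖ ≤ M) {y : ℝ} (hy : y ∈ Icc (-1 : ℝ) 1)
    {m : ℕ} (hm : 0 < m) :
    ‖(derivative^[m] P).eval (y : ℂ)‖ ≤
      M * m.factorial * (Real.exp 1 ^ 2 * n ^ 2 / (2 * m ^ 2)) ^ m := by
  -- `t = 2 m / n` minimizes `exp (n t) / t ^ (2 m)`.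
  refine (norm_eval_iterate_derivative_le hdeg hP hy m
    (t := 2 * m / n) (by positivity)).trans_eq ?_
  have hexp : Real.exp (n * (2 * m / n)) = (Real.exp 1 ^ 2) ^ m := by
    rw [← pow_mul, ← Real.exp_nat_mul]
    congr 1
    push_cast
    field_simp
  rw [hexp, mul_left_comm, ← mul_assoc, mul_div_assoc, ← div_pow]
  congr 2
  field_simp

end BernsteinWalsh

theorem iterate_derivative_comp_linear {R : Type*} [CommSemiring R] (p : R[X]) (r s : R) (m : ℕ) :
    derivative^[m] (p.comp (C r * X + C s)) =
      C (r ^ m) * (derivative^[m] p).comp (C r * X + C s) := by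
  induction m with
  | zero => simp
  | succ m ih =>
    rw [Function.iterate_succ_apply', ih, Function.iterate_succ_apply', derivative_C_mul,
      derivative_comp]
    simp only [derivative_add, derivative_C_mul, derivative_X, derivative_C, mul_one, add_zero,
      pow_succ, C_mul, mul_assoc]

section Markov

variable {n : ℕ} {P : ℝ[X]}

theorem eval_iterate_derivative_endpoint_le (hdeg : P.natDegree ≤ n) {a b : ℝ}
    (hP : ∀ x ∈ uIcc a b, |P.eval x| ≤ 1) (m : ℕ) :
    ((b - a) / 2) ^ m * (derivative^[m] P).eval b ≤
      (derivative^[m] (Chebyshev.T ℝ n)).eval 1 := by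
  set Q : ℝ[X] := P.comp (C ((b - a) / 2) * X + C ((a + b) / 2)) with hQ
  have hQdeg : Q.natDegree ≤ n :=
    natDegree_comp_le.trans ((Nat.mul_le_mul hdeg natDegree_linear_le).trans_eq (mul_one n))
  have hQbound : ∀ x ∈ Icc (-1 : ℝ) 1, |Q.eval x| ≤ 1 := by
    rintro x ⟨hx₁, hx₂⟩
    rw [hQ, eval_comp]
    apply hP
    simp only [eval_add, eval_mul, eval_C, eval_X]
    rcases le_total a b with hab | hab
    · rw [uIcc_of_le hab]
      constructor <;> nlinarith
    · rw [uIcc_of_ge hab]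
      constructor <;> nlinarith
  have h := Chebyshev.eval_iterate_derivative_le_of_forall_abs_le_one (k := m) le_rfl
    (degree_le_of_natDegree_le hQdeg) hQbound
  rw [hQ, iterate_derivative_comp_linear] at h
  have hendpoint : (b - a) / 2 * 1 + (a + b) / 2 = b := by ring
  simpa only [eval_mul, eval_C, eval_comp, eval_add, eval_X, hendpoint] using h

theorem abs_eval_iterate_derivative_endpoint_le (hdeg : P.natDegree ≤ n) {a b : ℝ}
    (hP : ∀ x ∈ uIcc a b, |P.eval x| ≤ 1) (m : ℕ) :
    (|b - a| / 2) ^ m * |(derivative^[m] P).eval b| ≤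
      (derivative^[m] (Chebyshev.T ℝ n)).eval 1 := by
  have hneg := eval_iterate_derivative_endpoint_le (P := -P) (by simpa using hdeg)
    (by simpa using hP) m
  rw [iterate_derivative_neg, eval_neg, mul_neg] at hneg
  have habs : (|b - a| / 2) ^ m * |(derivative^[m] P).eval b| =
      |((b - a) / 2) ^ m * (derivative^[m] P).eval b| := by
    rw [abs_mul, abs_pow, abs_div, abs_two]
  rw [habs]
  exact abs_le'.mpr ⟨eval_iterate_derivative_endpoint_le hdeg hP m, hneg⟩

theorem abs_eval_iterate_derivative_le_two_pow_mul (hdeg : P.natDegree ≤ n)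
    (hP : ∀ x ∈ Icc (-1 : ℝ) 1, |P.eval x| ≤ 1) {y : ℝ} (hy : y ∈ Icc (-1 : ℝ) 1) (m : ℕ) :
    |(derivative^[m] P).eval y| ≤ 2 ^ m * (derivative^[m] (Chebyshev.T ℝ n)).eval 1 := by
  obtain ⟨a, ha, hya⟩ : ∃ a ∈ Icc (-1 : ℝ) 1, 1 ≤ |y - a| := by
    rcases le_total 0 y with h | h
    · exact ⟨-1, by simp, le_abs.mpr (.inl (by linarith))⟩
    · exact ⟨1, by simp, le_abs.mpr (.inr (by linarith))⟩
  have h := abs_eval_iterate_derivative_endpoint_le hdeg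
    (fun x hx => hP x (uIcc_subset_Icc ha hy hx)) m
  calc |(derivative^[m] P).eval y|
      = 2 ^ m * ((1 / 2) ^ m * |(derivative^[m] P).eval y|) := by
        rw [← mul_assoc, ← mul_pow]
        norm_num
    _ ≤ 2 ^ m * ((|y - a| / 2) ^ m * |(derivative^[m] P).eval y|) := by gcongr
    _ ≤ 2 ^ m * (derivative^[m] (Chebyshev.T ℝ n)).eval 1 := by gcongr

theorem abs_eval_derivative_le_two_mul_sq (hdeg : P.natDegree ≤ n)
    (hP : ∀ x ∈ Icc (-1 : ℝ) 1, |P.eval x| ≤ 1) {y : ℝ} (hy : y ∈ Icc (-1 : ℝ) 1) :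
    |(derivative P).eval y| ≤ 2 * n ^ 2 := by
  simpa [Chebyshev.derivative_T_eval_one] using
    abs_eval_iterate_derivative_le_two_pow_mul hdeg hP hy 1

theorem abs_eval_iterate_derivative_le_factorial_mul_pow (hdeg : P.natDegree ≤ n) (hn : 0 < n)
    (hP : ∀ x ∈ Icc (-1 : ℝ) 1, |P.eval x| ≤ 1) {y : ℝ} (hy : y ∈ Icc (-1 : ℝ) 1)
    {m : ℕ} (hm : 0 < m) :
    |(derivative^[m] P).eval y| ≤
      m.factorial * (Real.exp 1 ^ 2 * n ^ 2 / (2 * m ^ 2)) ^ m := by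
  have hofReal (p : ℝ[X]) (x : ℝ) : ‖(p.map Complex.ofRealHom).eval (x : ℂ)‖ = |p.eval x| := by
    rw [← Complex.ofRealHom_eq_coe, eval_map_apply, Complex.ofRealHom_eq_coe, Complex.norm_real,
      Real.norm_eq_abs]
  have h := norm_eval_iterate_derivative_le_factorial_mul_pow
    (P := P.map Complex.ofRealHom) (M := 1) (natDegree_map_le.trans hdeg) hn
    (fun x hx => (hofReal P x).trans_le (hP x hx)) hy hm
  rwa [iterate_derivative_map, hofReal, one_mul] at h

theorem abs_eval_iterate_derivative_le_factorial_mul_half_pow (hdeg : P.natDegree ≤ n) (hn : 0 < n)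
    (hP : ∀ x ∈ Icc (-1 : ℝ) 1, |P.eval x| ≤ 1) {y : ℝ} (hy : y ∈ Icc (-1 : ℝ) 1)
    {m : ℕ} (hm : 0 < m) :
    |(derivative^[m] P).eval y| ≤
      m.factorial * (1 / 2 * (2 * Real.exp 1 * n ^ 2 / m ^ 2) ^ m) := by
  obtain rfl | hm₂ : m = 1 ∨ 2 ≤ m := by omega
  · calc |(derivative P).eval y| ≤ 2 * n ^ 2 := abs_eval_derivative_le_two_mul_sq hdeg hP hy
      _ ≤ Real.exp 1 * n ^ 2 := by
        gcongr
        linarith [Real.exp_one_gt_d9]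
      _ = _ := by
        simp only [Nat.factorial_one, Nat.cast_one, one_pow, div_one, pow_one, one_mul]
        ring
  · have hexp : (Real.exp 1 / 4) ^ m ≤ 1 / 2 := by
      have he := Real.exp_one_lt_d9
      calc (Real.exp 1 / 4) ^ m ≤ (Real.exp 1 / 4) ^ 2 :=
            pow_le_pow_of_le_one (by positivity) (by linarith) hm₂
        _ ≤ (2.72 / 4) ^ 2 := by
          gcongr
          linarith
        _ ≤ 1 / 2 := by norm_num
    calc |(derivative^[m] P).eval y|
        ≤ m.factorial * (Real.exp 1 ^ 2 * n ^ 2 / (2 * m ^ 2)) ^ m :=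
          abs_eval_iterate_derivative_le_factorial_mul_pow hdeg hn hP hy hm
      _ = m.factorial * ((Real.exp 1 / 4) ^ m * (2 * Real.exp 1 * n ^ 2 / m ^ 2) ^ m) := by
        rw [← mul_pow (Real.exp 1 / 4)]
        congr 2
        field_simp
        norm_num
      _ ≤ m.factorial * (1 / 2 * (2 * Real.exp 1 * n ^ 2 / m ^ 2) ^ m) := by gcongr

end Markov

theorem taylor_remainder_markov_bound
    (n : ℕ) (hn : 0 < n) (P : Polynomial ℝ) (hdeg : P.natDegree ≤ n)
    (hP : ∀ x ∈ Set.Icc (-1:ℝ) 1, |P.eval x| ≤ 1)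
    (a b : ℝ) (hab : a ≤ b) (hI : Set.Icc a b ⊆ Set.Icc (-1:ℝ) 1)
    (k : ℕ) :
    ∀ x ∈ Set.Icc a b,
      |P.eval x - ∑ j ∈ Finset.range (k + 1),
          ((Polynomial.derivative^[j] P).eval ((a + b) / 2)) * (x - (a + b) / 2) ^ j /
            (Nat.factorial j : ℝ)|
        ≤ (1 / 2) * (Real.exp 1 * (b - a) * (n : ℝ) ^ 2 / ((k : ℝ) + 1) ^ 2) ^ (k + 1) := by
  intro x hx
  obtain ⟨ξ, hξ, hremainder⟩ := exists_eval_sub_taylor_sum_eq P k ((a + b) / 2) x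
  have hcentre : (a + b) / 2 ∈ Icc a b := ⟨by linarith, by linarith⟩
  have hderiv := abs_eval_iterate_derivative_le_factorial_mul_half_pow hdeg hn hP
    (hI (uIcc_subset_Icc hcentre hx hξ)) k.succ_pos
  have hdist : |x - (a + b) / 2| ≤ (b - a) / 2 :=
    abs_le.mpr ⟨by linarith [hx.1], by linarith [hx.2]⟩
  rw [hremainder, abs_div, abs_mul, abs_pow, Nat.abs_cast, div_le_iff₀ (by positivity)]
  calc _ ≤ ((k + 1).factorial *
        (1 / 2 * (2 * Real.exp 1 * n ^ 2 / ((k + 1 : ℕ) : ℝ) ^ 2) ^ (k + 1))) *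
          ((b - a) / 2) ^ (k + 1) := by gcongr
    _ = 1 / 2 * (2 * Real.exp 1 * n ^ 2 / ((k : ℝ) + 1) ^ 2 * ((b - a) / 2)) ^ (k + 1) *
          (k + 1).factorial := by
      rw [mul_pow]
      push_cast
      ring
    _ = _ := by
      congr 3
      ring
end

section
/- For every δ_0 > 0, every c_0 ∈ (0,1) and every ε > 0 there exists κ = κ(δ_0, ε, c_0) > 0 with the following property. Let n be a positive integer, let P be a nonzero real polynomial of degree ≤ n, let δ ≥ δ_0, and let c satisfy c_0 ≤ c < 1 and 0 < ε < (1−c)/(2−c). If |𝔈_P(δ)| ≤ κ, then |𝔈_P(cδ)| ≥ |𝔈_P(δ)|^{1/(2−c)+ε}. -/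
open MeasureTheory Set

/-- The sup norm of a polynomial on [-1,1]. -/
noncomputable def supNorm (P : Polynomial ℝ) : ℝ :=
  sSup ((fun x => |P.eval x|) '' Set.Icc (-1:ℝ) 1)

/-- 𝔈_P(δ) = {x ∈ [-1,1] : |P(x)| ≤ e^{-δn} ‖P‖_{[-1,1]}}. -/
def sublevelSet (P : Polynomial ℝ) (n : ℕ) (δ : ℝ) : Set ℝ :=
  {x : ℝ | x ∈ Set.Icc (-1:ℝ) 1 ∧ |P.eval x| ≤ Real.exp (-δ * n) * supNorm P}

/-!
Factor `|P|` over the complex roots of `P`, and let `I` be a component, of length `ℓ`, of the open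
sublevel set `{|P| < e ^ (-c δ n) ‖P‖}`. It has an endpoint `x₀` with `|P x₀| ≥ e ^ (-c δ n) ‖P‖`.
The roots further from `x₀` than a large multiple of `ℓ` contribute a factor that is essentially
constant on `I`, so a drop of `|P|` from `|P x₀|` to `e ^ (-δ n) ‖P‖` is due to the `k` near roots;
by Pólya's estimate for monic polynomials it happens on a proportion of at most about
`e ^ (-(1 - c) δ n / k)` of `I`. On the other hand `k` is at most about `c δ n / log (1 / ℓ)`: each
near root makes `|P|` larger by a factor of order `1 / ℓ` at points far from `x₀` than at `x₀`, and
by Chebyshev's extremal inequality the other roots cannot make up for this gain. So `𝔈_P(δ)`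
fills at most the proportion `(C ℓ) ^ ((1 - c) / c - o(1))` of `I`, and summing over the components
gives `|𝔈_P(δ)| ≤ (C |𝔈_P(cδ)|) ^ (1 / c - o(1))`.
-/

section RootProd

open Polynomial

theorem eval_cosh_le_of_abs_le {Q : ℝ[X]} {m : ℕ} (hdeg : Q.natDegree ≤ m) {B η : ℝ} (hB : 0 < B)
    (hη : 0 ≤ η) (hQ : ∀ t ∈ Icc (-1 : ℝ) 1, |Q.eval t| ≤ B) :
    Q.eval (Real.cosh η) ≤ B * Real.exp (m * η) := by
  have hnormalized : ∀ t ∈ Icc (-1 : ℝ) 1, |(C B⁻¹ * Q).eval t| ≤ 1 := fun t ht => by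
    rw [eval_C_mul, abs_mul, abs_of_pos (inv_pos.2 hB), inv_mul_le_one₀ hB]
    exact hQ t ht
  have hextremal := Chebyshev.eval_iterate_derivative_le_of_forall_abs_le_one (k := 0)
    (Real.one_le_cosh η) (natDegree_le_iff_degree_le.1 ((natDegree_C_mul_le _ _).trans hdeg))
    hnormalized
  have hcosh : Real.cosh (m * η) ≤ Real.exp (m * η) := by
    rw [Real.cosh_eq]
    linarith [Real.exp_le_exp.2 (neg_le_self (by positivity : 0 ≤ m * η))]
  rw [Function.iterate_zero_apply, Function.iterate_zero_apply, eval_C_mul, ← Int.cast_natCast,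
    Chebyshev.T_real_cosh, Int.cast_natCast, inv_mul_le_iff₀ hB] at hextremal
  exact hextremal.trans (mul_le_mul_of_nonneg_left hcosh hB.le)

/-- The modulus at the real point `x` of the monic polynomial whose complex roots, listed with
multiplicity, are the `z i` with `i ∈ s`. -/
noncomputable def rootProd {ι : Type*} (z : ι → ℂ) (s : Finset ι) (x : ℝ) : ℝ :=
  ∏ i ∈ s, ‖(x : ℂ) - z i‖

variable {ι : Type*} {z : ι → ℂ} {s : Finset ι}

theorem rootProd_nonneg (x : ℝ) : 0 ≤ rootProd z s x :=
  Finset.prod_nonneg fun _ _ => norm_nonneg _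

theorem exists_eval_eq_rootProd_sq (z : ι → ℂ) (s : Finset ι) :
    ∃ Q : ℝ[X], Q.natDegree ≤ 2 * s.card ∧ ∀ x, Q.eval x = rootProd z s x ^ 2 := by
  refine ⟨∏ i ∈ s, ((X - C (z i).re) ^ 2 + C ((z i).im ^ 2)), ?_, fun x => ?_⟩
  · refine (natDegree_prod_le _ _).trans
      ((Finset.sum_le_card_nsmul _ _ 2 fun i _ => ?_).trans_eq ?_)
    · compute_degree
    · rw [smul_eq_mul, mul_comm]
  · rw [rootProd, ← Finset.prod_pow, eval_prod]
    refine Finset.prod_congr rfl fun i _ => ?_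
    simp only [eval_add, eval_pow, eval_sub, eval_X, eval_C, Complex.sq_norm, Complex.normSq_apply,
      Complex.sub_re, Complex.sub_im, Complex.ofReal_re, Complex.ofReal_im]
    ring

theorem rootProd_le_of_le_on_interval {a h B η : ℝ} (hB : 0 < B) (hη : 0 ≤ η)
    (hbound : ∀ t ∈ Icc (-1 : ℝ) 1, rootProd z s (a + h * t) ≤ B) :
    rootProd z s (a + h * Real.cosh η) ≤ B * Real.exp (η * s.card) := by
  obtain ⟨Q, hdeg, hQ⟩ := exists_eval_eq_rootProd_sq z s
  have heval (t : ℝ) : (Q.comp (C a + C h * X)).eval t = rootProd z s (a + h * t) ^ 2 := by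
    simp only [eval_comp, eval_add, eval_C, eval_C_mul, eval_X, hQ]
  have hcomp : (Q.comp (C a + C h * X)).natDegree ≤ 2 * s.card := by
    refine natDegree_comp_le.trans ((Nat.mul_le_mul hdeg ?_).trans_eq (mul_one _))
    compute_degree
  have hsq := eval_cosh_le_of_abs_le hcomp (pow_pos hB 2) hη fun t ht => by
    rw [heval, abs_of_nonneg (sq_nonneg _)]
    exact pow_le_pow_left₀ (rootProd_nonneg _) (hbound t ht) 2
  refine le_of_sq_le_sq ?_ (by positivity)
  calc rootProd z s (a + h * Real.cosh η) ^ 2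
      ≤ B ^ 2 * Real.exp ((2 * s.card : ℕ) * η) := by rwa [heval] at hsq
    _ = (B * Real.exp (η * s.card)) ^ 2 := by
        rw [mul_pow, ← Real.exp_nat_mul]
        push_cast
        ring_nf

/-- The interval with endpoints `x₀ ± h (cosh η - 1)` and `x₀ ± h (cosh η + 1)`, where
`h = 1 / (cosh η + 1)` and the sign is chosen to point into `[-1, 1]`, keeps away from `x₀`. -/
theorem rootProd_le_of_le_away {x₀ R B η : ℝ} (hx₀ : x₀ ∈ Icc (-1 : ℝ) 1) (hB : 0 < B)
    (hη : 0 ≤ η) (hR : 2 * R * (Real.cosh η + 1) ≤ Real.cosh η - 1)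
    (haway : ∀ y ∈ Icc (-1 : ℝ) 1, 2 * R ≤ |y - x₀| → rootProd z s y ≤ B) :
    rootProd z s x₀ ≤ B * Real.exp (η * s.card) := by
  set h := (Real.cosh η + 1)⁻¹ with hh
  have hcosh := Real.one_le_cosh η
  have hpos : 0 < h := by positivity
  have hhcosh : h ≤ h * Real.cosh η := le_mul_of_one_le_right hpos.le hcosh
  have hwidth : h * Real.cosh η + h = 1 := by
    rw [← mul_add_one, hh, inv_mul_cancel₀ (by positivity)]
  have hgap : 2 * R ≤ h * Real.cosh η - h := by
    rw [← mul_sub_one, hh, ← div_eq_inv_mul]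
    exact (le_div_iff₀ (by positivity)).2 hR
  have hscale {t : ℝ} (ht : t ∈ Icc (-1 : ℝ) 1) : -h ≤ h * t ∧ h * t ≤ h :=
    ⟨by nlinarith [ht.1], by nlinarith [ht.2]⟩
  rcases le_total x₀ 0 with hleft | hright
  · have := rootProd_le_of_le_on_interval (z := z) (s := s) (a := x₀ + h * Real.cosh η) (h := -h)
      hB hη fun t ht => by
        obtain ⟨hlo, hhi⟩ := hscale ht
        exact haway _ ⟨by linarith [hx₀.1], by linarith⟩ (by rw [le_abs]; left; linarith)
    rwa [neg_mul, add_neg_cancel_right] at this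
  · have := rootProd_le_of_le_on_interval (z := z) (s := s) (a := x₀ - h * Real.cosh η) (h := h)
      hB hη fun t ht => by
        obtain ⟨hlo, hhi⟩ := hscale ht
        exact haway _ ⟨by linarith, by linarith [hx₀.2]⟩ (by rw [le_abs]; right; linarith)
    rwa [sub_add_cancel] at this

end RootProd

section PolyaEstimate

theorem setLIntegral_Ioc_enorm_rpow_neg_half {ρ : ℝ} (hρ : 0 < ρ) :
    ∫⁻ x in Ioc 0 ρ, ‖x‖ₑ ^ (-(1 / 2) : ℝ) = ENNReal.ofReal (2 * ρ ^ (1 / 2 : ℝ)) := by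
  have hreal : ∀ x ∈ Ioc 0 ρ, ‖x‖ₑ ^ (-(1 / 2) : ℝ) = ENNReal.ofReal (x ^ (-(1 / 2) : ℝ)) :=
    fun x hx => by rw [Real.enorm_of_nonneg hx.1.le, ENNReal.ofReal_rpow_of_pos hx.1]
  have hintegrable : IntegrableOn (fun x : ℝ => x ^ (-(1 / 2) : ℝ)) (Ioc 0 ρ) :=
    (intervalIntegrable_iff_integrableOn_Ioc_of_le hρ.le).1
      (intervalIntegral.intervalIntegrable_rpow' (by norm_num))
  rw [setLIntegral_congr_fun measurableSet_Ioc hreal,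
    ← ofReal_integral_eq_lintegral_ofReal hintegrable
      (ae_restrict_of_forall_mem measurableSet_Ioc fun x hx => Real.rpow_nonneg hx.1.le _),
    ← intervalIntegral.integral_of_le hρ.le, integral_rpow (Or.inl (by norm_num))]
  congr 1
  norm_num
  ring

theorem setLIntegral_Ioo_enorm_rpow_neg_half_le {ρ : ℝ} (hρ : 0 < ρ) :
    ∫⁻ x in Ioo (-ρ) ρ, ‖x‖ₑ ^ (-(1 / 2) : ℝ) ≤ ENNReal.ofReal (4 * ρ ^ (1 / 2 : ℝ)) := by
  have hcover : Ioo (-ρ) ρ ⊆ Neg.neg ⁻¹' Ioc 0 ρ ∪ ({0} ∪ Ioc 0 ρ) := fun x hx => by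
    rcases lt_trichotomy x 0 with hneg | hzero | hpos
    · exact Or.inl ⟨neg_pos.2 hneg, neg_le.1 hx.1.le⟩
    · exact Or.inr (Or.inl hzero)
    · exact Or.inr (Or.inr ⟨hpos, hx.2.le⟩)
  have hreflect : ∫⁻ x in Neg.neg ⁻¹' Ioc 0 ρ, ‖x‖ₑ ^ (-(1 / 2) : ℝ) =
      ∫⁻ x in Ioc 0 ρ, ‖x‖ₑ ^ (-(1 / 2) : ℝ) := by
    simpa only [enorm_neg] using
      (Measure.measurePreserving_neg (volume : Measure ℝ)).setLIntegral_comp_preimage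
        (measurableSet_Ioc (a := 0) (b := ρ)) (f := fun x => ‖x‖ₑ ^ (-(1 / 2) : ℝ)) (by fun_prop)
  have hpoint : ∫⁻ x in ({0} : Set ℝ), ‖x‖ₑ ^ (-(1 / 2) : ℝ) = 0 :=
    setLIntegral_measure_zero _ _ Real.volume_singleton
  calc ∫⁻ x in Ioo (-ρ) ρ, ‖x‖ₑ ^ (-(1 / 2) : ℝ)
      ≤ _ := lintegral_mono_set hcover
    _ ≤ _ := lintegral_union_le _ _ _
    _ ≤ _ := add_le_add_right (lintegral_union_le _ _ _) _
    _ = ENNReal.ofReal (4 * ρ ^ (1 / 2 : ℝ)) := by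
        rw [hreflect, hpoint, zero_add, setLIntegral_Ioc_enorm_rpow_neg_half hρ,
          ← ENNReal.ofReal_add (by positivity) (by positivity)]
        ring_nf

theorem setLIntegral_ball_enorm_sub_rpow_neg_half_le (a : ℝ) {ρ : ℝ} (hρ : 0 < ρ) :
    ∫⁻ x in Metric.ball a ρ, ‖x - a‖ₑ ^ (-(1 / 2) : ℝ) ≤ ENNReal.ofReal (4 * ρ ^ (1 / 2 : ℝ)) := by
  have hball : Metric.ball a ρ = (fun x => x - a) ⁻¹' Ioo (-ρ) ρ := by
    rw [preimage_sub_const_Ioo, Real.ball_eq_Ioo, neg_add_eq_sub, add_comm]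
  rw [hball, (measurePreserving_sub_right (volume : Measure ℝ) a).setLIntegral_comp_preimage
    measurableSet_Ioo (f := fun x => ‖x‖ₑ ^ (-(1 / 2) : ℝ)) (by fun_prop)]
  exact setLIntegral_Ioo_enorm_rpow_neg_half_le hρ

/-- Among sets of measure `m` the interval around `a` is the worst one; splitting `A` at the ball
of radius `m / 4` balances the two contributions. -/
theorem setLIntegral_enorm_sub_rpow_neg_half_le {A : Set ℝ} (a : ℝ) {m : ℝ} (hm : 0 < m)
    (hA : volume A = ENNReal.ofReal m) :
    ∫⁻ x in A, ‖x - a‖ₑ ^ (-(1 / 2) : ℝ) ≤ ENNReal.ofReal (4 * m ^ (1 / 2 : ℝ)) := by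
  have hhalf : (m / 4) ^ (1 / 2 : ℝ) = m ^ (1 / 2 : ℝ) / 2 := by
    rw [Real.div_rpow hm.le (by norm_num), ← Real.sqrt_eq_rpow 4,
      show (4 : ℝ) = 2 ^ 2 by norm_num, Real.sqrt_sq (by norm_num)]
  have hinside : ∫⁻ x in A ∩ Metric.ball a (m / 4), ‖x - a‖ₑ ^ (-(1 / 2) : ℝ)
      ≤ ENNReal.ofReal (2 * m ^ (1 / 2 : ℝ)) := by
    refine (lintegral_mono_set inter_subset_right).trans
      ((setLIntegral_ball_enorm_sub_rpow_neg_half_le a (by positivity)).trans_eq ?_)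
    rw [hhalf]
    ring_nf
  have houtside : ∫⁻ x in A \ Metric.ball a (m / 4), ‖x - a‖ₑ ^ (-(1 / 2) : ℝ)
      ≤ ENNReal.ofReal (2 * m ^ (1 / 2 : ℝ)) := by
    calc ∫⁻ x in A \ Metric.ball a (m / 4), ‖x - a‖ₑ ^ (-(1 / 2) : ℝ)
        ≤ ∫⁻ _ in A \ Metric.ball a (m / 4), ENNReal.ofReal ((m / 4) ^ (-(1 / 2) : ℝ)) := by
          refine setLIntegral_mono measurable_const fun x hx => ?_
          have hfar : m / 4 ≤ ‖x - a‖ := by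
            simpa only [Metric.mem_ball, dist_eq_norm, not_lt] using hx.2
          rw [← ofReal_norm, ENNReal.ofReal_rpow_of_pos ((by positivity : 0 < m / 4).trans_le hfar)]
          exact ENNReal.ofReal_le_ofReal
            (Real.rpow_le_rpow_of_nonpos (by positivity) hfar (by norm_num))
      _ ≤ ENNReal.ofReal ((m / 4) ^ (-(1 / 2) : ℝ)) * ENNReal.ofReal m := by
          rw [setLIntegral_const, ← hA]
          gcongr
          exact sdiff_subset
      _ = ENNReal.ofReal (2 * m ^ (1 / 2 : ℝ)) := by
          have hsq : m ^ (1 / 2 : ℝ) * m ^ (1 / 2 : ℝ) = m := by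
            rw [← Real.rpow_add hm, add_halves, Real.rpow_one]
          rw [← ENNReal.ofReal_mul (by positivity), Real.rpow_neg (by positivity), hhalf, inv_div,
            div_mul_eq_mul_div, (div_eq_iff (by positivity)).2]
          rw [mul_assoc, hsq]
  rw [← lintegral_inter_add_sdiff _ A Metric.isOpen_ball.measurableSet]
  refine (add_le_add hinside houtside).trans_eq ?_
  rw [← ENNReal.ofReal_add (by positivity) (by positivity)]
  ring_nf

variable {ι : Type*} {s : Finset ι}

theorem setLIntegral_prod_enorm_sub_rpow_le (a : ι → ℝ) (hs : s.Nonempty) {A : Set ℝ} {m : ℝ}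
    (hm : 0 < m) (hA : volume A = ENNReal.ofReal m) :
    ∫⁻ x in A, (∏ i ∈ s, ‖x - a i‖ₑ) ^ (-(1 / 2) * (s.card : ℝ)⁻¹ : ℝ)
      ≤ ENNReal.ofReal (4 * m ^ (1 / 2 : ℝ)) := by
  have hcard : (s.card : ℝ) ≠ 0 := Nat.cast_ne_zero.2 hs.card_ne_zero
  calc ∫⁻ x in A, (∏ i ∈ s, ‖x - a i‖ₑ) ^ (-(1 / 2) * (s.card : ℝ)⁻¹ : ℝ)
      = ∫⁻ x in A, ∏ i ∈ s, (‖x - a i‖ₑ ^ (-(1 / 2) : ℝ)) ^ (s.card : ℝ)⁻¹ := by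
        simp only [← ENNReal.rpow_mul, ENNReal.prod_rpow_of_ne_top fun _ _ => enorm_ne_top]
    _ ≤ ∏ i ∈ s, (∫⁻ x in A, ‖x - a i‖ₑ ^ (-(1 / 2) : ℝ)) ^ (s.card : ℝ)⁻¹ :=
        ENNReal.lintegral_prod_norm_pow_le s (fun _ _ => by fun_prop)
          (by rw [Finset.sum_const, nsmul_eq_mul, mul_inv_cancel₀ hcard]) (fun _ _ => by positivity)
    _ ≤ ∏ _ ∈ s, ENNReal.ofReal (4 * m ^ (1 / 2 : ℝ)) ^ (s.card : ℝ)⁻¹ :=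
        Finset.prod_le_prod' fun i _ => ENNReal.rpow_le_rpow
          (setLIntegral_enorm_sub_rpow_neg_half_le (a i) hm hA) (by positivity)
    _ = ENNReal.ofReal (4 * m ^ (1 / 2 : ℝ)) := by
        rw [Finset.prod_const, ENNReal.rpow_inv_natCast_pow hs.card_ne_zero]

theorem volume_prod_abs_sub_le_pow_ne_top (a : ι → ℝ) (hs : s.Nonempty) {h : ℝ} (hh : 0 < h) :
    volume {x : ℝ | ∏ i ∈ s, |x - a i| ≤ h ^ s.card} ≠ ⊤ := by
  have hcover : {x : ℝ | ∏ i ∈ s, |x - a i| ≤ h ^ s.card} ⊆ ⋃ i ∈ s, Metric.closedBall (a i) h := by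
    intro x hx
    by_contra! hfar
    simp only [mem_iUnion, Metric.mem_closedBall, Real.dist_eq, not_exists, not_le] at hfar
    refine (Finset.prod_lt_prod_of_nonempty (fun _ _ => hh) hfar hs).not_ge ?_
    rwa [Finset.prod_const]
  exact measure_ne_top_of_subset hcover (measure_biUnion_lt_top s.finite_toSet fun _ _ =>
    measure_closedBall_lt_top).ne

theorem ofReal_rpow_le_prod_enorm_sub_rpow {a : ι → ℝ} (hs : s.Nonempty) {h x : ℝ} (hh : 0 < h)
    (hx : ∏ i ∈ s, |x - a i| ≤ h ^ s.card) :
    ENNReal.ofReal (h ^ (-(1 / 2) : ℝ)) ≤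
      (∏ i ∈ s, ‖x - a i‖ₑ) ^ (-(1 / 2) * (s.card : ℝ)⁻¹ : ℝ) := by
  have hprod : ∏ i ∈ s, ‖x - a i‖ₑ ≤ ENNReal.ofReal h ^ s.card := by
    simp only [← ofReal_norm]
    rw [← ENNReal.ofReal_prod_of_nonneg fun _ _ => norm_nonneg _, ← ENNReal.ofReal_pow hh.le]
    exact ENNReal.ofReal_le_ofReal hx
  have hroot : (∏ i ∈ s, ‖x - a i‖ₑ) ^ (s.card : ℝ)⁻¹ ≤ ENNReal.ofReal h := by
    rwa [ENNReal.rpow_inv_le_iff (Nat.cast_pos.2 hs.card_pos), ENNReal.rpow_natCast]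
  rw [← ENNReal.ofReal_rpow_of_pos hh, mul_comm, ENNReal.rpow_mul, ENNReal.rpow_neg,
    ENNReal.rpow_neg, ENNReal.inv_le_inv]
  exact ENNReal.rpow_le_rpow hroot (by norm_num)

theorem le_sixteen_mul_of_rpow_mul_le {h m : ℝ} (hh : 0 < h) (hm : 0 < m)
    (hle : h ^ (-(1 / 2) : ℝ) * m ≤ 4 * m ^ (1 / 2 : ℝ)) : m ≤ 16 * h := by
  rw [Real.rpow_neg hh.le, ← Real.sqrt_eq_rpow, ← Real.sqrt_eq_rpow,
    inv_mul_le_iff₀ (Real.sqrt_pos.2 hh)] at hle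
  have hsqrt : √m ≤ 4 * √h := by
    refine le_of_mul_le_mul_right ?_ (Real.sqrt_pos.2 hm)
    rw [Real.mul_self_sqrt hm.le]
    linarith
  calc m = √m ^ 2 := (Real.sq_sqrt hm.le).symm
    _ ≤ (4 * √h) ^ 2 := pow_le_pow_left₀ (Real.sqrt_nonneg m) hsqrt 2
    _ = 16 * h := by rw [mul_pow, Real.sq_sqrt hh.le]; norm_num

theorem volume_prod_abs_sub_le_pow (a : ι → ℝ) (hs : s.Nonempty) {h : ℝ} (hh : 0 < h) :
    volume {x : ℝ | ∏ i ∈ s, |x - a i| ≤ h ^ s.card} ≤ ENNReal.ofReal (16 * h) := by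
  set E := {x : ℝ | ∏ i ∈ s, |x - a i| ≤ h ^ s.card}
  rcases eq_or_ne (volume E) 0 with hnull | hnull
  · exact hnull.trans_le bot_le
  have hfinite := volume_prod_abs_sub_le_pow_ne_top a hs hh
  have hm := ENNReal.toReal_pos hnull hfinite
  have hvol : volume E = ENNReal.ofReal (volume E).toReal := (ENNReal.ofReal_toReal hfinite).symm
  have hmeas : MeasurableSet E :=
    (isClosed_le (by fun_prop) continuous_const : IsClosed E).measurableSet
  have hchebyshev : ENNReal.ofReal (h ^ (-(1 / 2) : ℝ)) * ENNReal.ofReal (volume E).toReal ≤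
      ENNReal.ofReal (4 * (volume E).toReal ^ (1 / 2 : ℝ)) := by
    rw [← hvol, ← setLIntegral_const]
    exact (setLIntegral_mono' hmeas fun x hx => ofReal_rpow_le_prod_enorm_sub_rpow hs hh hx).trans
      (setLIntegral_prod_enorm_sub_rpow_le a hs hm hvol)
  rw [← ENNReal.ofReal_mul (by positivity), ENNReal.ofReal_le_ofReal_iff (by positivity)]
    at hchebyshev
  rw [hvol]
  exact ENNReal.ofReal_le_ofReal (le_sixteen_mul_of_rpow_mul_le hh hm hchebyshev)

theorem volume_rootProd_le_pow (z : ι → ℂ) (hs : s.Nonempty) {h : ℝ} (hh : 0 < h) :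
    volume {x : ℝ | rootProd z s x ≤ h ^ s.card} ≤ ENNReal.ofReal (16 * h) := by
  refine (measure_mono fun x (hx : rootProd z s x ≤ h ^ s.card) => ?_).trans
    (volume_prod_abs_sub_le_pow (fun i => (z i).re) hs hh)
  refine (Finset.prod_le_prod (fun _ _ => abs_nonneg _) fun i _ => ?_).trans hx
  simpa only [Complex.sub_re, Complex.ofReal_re] using Complex.abs_re_le_norm ((x : ℂ) - z i)

end PolyaEstimate

section NearAndFarRoots

variable {ι : Type*}

/-- The indices of the roots at distance at most `r` from `x₀`; only these can make the product
much smaller close to `x₀` than at `x₀`. -/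
noncomputable def nearRoots (z : ι → ℂ) (s : Finset ι) (x₀ r : ℝ) : Finset ι :=
  {i ∈ s | ‖(x₀ : ℂ) - z i‖ ≤ r}

/-- The indices of the roots at distance more than `r` from `x₀`, complementary to `nearRoots`. -/
noncomputable def farRoots (z : ι → ℂ) (s : Finset ι) (x₀ r : ℝ) : Finset ι :=
  {i ∈ s | ¬‖(x₀ : ℂ) - z i‖ ≤ r}

variable {z : ι → ℂ} {s : Finset ι} {x₀ r : ℝ}

theorem rootProd_nearRoots_mul_farRoots (x : ℝ) :
    rootProd z (nearRoots z s x₀ r) x * rootProd z (farRoots z s x₀ r) x = rootProd z s x :=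
  Finset.prod_filter_mul_prod_filter_not _ _ _

theorem rootProd_nearRoots_le :
    rootProd z (nearRoots z s x₀ r) x₀ ≤ r ^ (nearRoots z s x₀ r).card := by
  rw [rootProd, ← Finset.prod_const]
  exact Finset.prod_le_prod (fun _ _ => norm_nonneg _) fun i hi => (Finset.mem_filter.1 hi).2

theorem rootProd_farRoots_pos (hr : 0 ≤ r) : 0 < rootProd z (farRoots z s x₀ r) x₀ :=
  Finset.prod_pos fun _ hi => hr.trans_lt (not_le.1 (Finset.mem_filter.1 hi).2)

theorem norm_ofReal_sub_le (x y : ℝ) (w : ℂ) : ‖(x : ℂ) - w‖ ≤ |x - y| + ‖(y : ℂ) - w‖ := by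
  rw [← Real.norm_eq_abs, ← Complex.norm_real, Complex.ofReal_sub]
  exact norm_sub_le_norm_sub_add_norm_sub _ _ _

theorem pow_le_rootProd_nearRoots {R y : ℝ} (hR : 0 ≤ R) (hrR : r ≤ R) (hy : 2 * R ≤ |y - x₀|) :
    R ^ (nearRoots z s x₀ r).card ≤ rootProd z (nearRoots z s x₀ r) y := by
  rw [rootProd, ← Finset.prod_const]
  refine Finset.prod_le_prod (fun _ _ => hR) fun i hi => ?_
  have hnear : ‖(x₀ : ℂ) - z i‖ ≤ r := (Finset.mem_filter.1 hi).2
  have htriangle : |y - x₀| ≤ ‖(y : ℂ) - z i‖ + ‖(x₀ : ℂ) - z i‖ := by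
    rw [← Real.norm_eq_abs, ← Complex.norm_real, Complex.ofReal_sub, norm_sub_rev (x₀ : ℂ)]
    exact norm_sub_le_norm_sub_add_norm_sub _ _ _
  linarith

theorem exp_mul_rootProd_farRoots_le {η x : ℝ} (hη : 0 ≤ η)
    (hx : |x - x₀| ≤ (1 - Real.exp (-η)) * r) :
    Real.exp (-(η * s.card)) * rootProd z (farRoots z s x₀ r) x₀ ≤
      rootProd z (farRoots z s x₀ r) x := by
  have hcard : (farRoots z s x₀ r).card ≤ s.card := Finset.card_filter_le _ _
  calc Real.exp (-(η * s.card)) * rootProd z (farRoots z s x₀ r) x₀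
      ≤ Real.exp (-η) ^ (farRoots z s x₀ r).card * rootProd z (farRoots z s x₀ r) x₀ := by
        refine mul_le_mul_of_nonneg_right ?_ (rootProd_nonneg _)
        rw [← Real.exp_nat_mul, mul_neg, mul_comm]
        gcongr
    _ = ∏ i ∈ farRoots z s x₀ r, Real.exp (-η) * ‖(x₀ : ℂ) - z i‖ := by
        rw [Finset.prod_mul_distrib, Finset.prod_const, rootProd]
    _ ≤ rootProd z (farRoots z s x₀ r) x := by
        refine Finset.prod_le_prod (fun _ _ => by positivity) fun i hi => ?_
        have hfar : r ≤ ‖(x₀ : ℂ) - z i‖ := (not_le.1 (Finset.mem_filter.1 hi).2).le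
        have htriangle := norm_ofReal_sub_le x₀ x (z i)
        have hslack := mul_le_mul_of_nonneg_left hfar
          (sub_nonneg.2 (Real.exp_le_one_iff.2 (neg_nonpos.2 hη)))
        rw [abs_sub_comm] at htriangle
        linarith

/-- At distance `2 * R` from `x₀` each near root contributes a factor at least `R / r` times the one
at `x₀`, and far roots can compensate for at most `e ^ (η * #s)` of this gain: there are few near
roots. -/
theorem exp_le_pow_card_nearRoots {R η τ : ℝ} (hx₀ : x₀ ∈ Icc (-1 : ℝ) 1) (hr : 0 < r)
    (hrR : r ≤ R) (hη : 0 ≤ η) (hR : 2 * R * (Real.cosh η + 1) ≤ Real.cosh η - 1)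
    (hlarge : ∀ y ∈ Icc (-1 : ℝ) 1, Real.exp (-τ) * rootProd z s y ≤ rootProd z s x₀) :
    Real.exp (-(τ + η * s.card)) ≤ (r / R) ^ (nearRoots z s x₀ r).card := by
  have hRpos : 0 < R := hr.trans_le hrR
  set k := (nearRoots z s x₀ r).card
  have hfarpos := rootProd_farRoots_pos (z := z) (s := s) (x₀ := x₀) hr.le
  set far := rootProd z (farRoots z s x₀ r)
  have haway : ∀ y ∈ Icc (-1 : ℝ) 1, 2 * R ≤ |y - x₀| →
      far y ≤ Real.exp τ * (r / R) ^ k * far x₀ := fun y hy hdist => by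
    rw [div_pow, mul_div_assoc', div_mul_eq_mul_div, le_div_iff₀ (by positivity)]
    calc far y * R ^ k ≤ far y * rootProd z (nearRoots z s x₀ r) y :=
          mul_le_mul_of_nonneg_left (pow_le_rootProd_nearRoots hRpos.le hrR hdist)
            (rootProd_nonneg _)
      _ = rootProd z s y := by rw [mul_comm, rootProd_nearRoots_mul_farRoots]
      _ ≤ Real.exp τ * rootProd z s x₀ := by
          rw [← inv_mul_le_iff₀ (Real.exp_pos τ), ← Real.exp_neg]
          exact hlarge y hy
      _ ≤ Real.exp τ * (r ^ k * far x₀) := by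
          rw [← rootProd_nearRoots_mul_farRoots (r := r)]
          gcongr
          exact rootProd_nearRoots_le
      _ = Real.exp τ * r ^ k * far x₀ := (mul_assoc _ _ _).symm
  have hgrowth := rootProd_le_of_le_away hx₀ (by positivity) hη hR haway
  have hcard : ((farRoots z s x₀ r).card : ℝ) ≤ s.card :=
    Nat.cast_le.2 (Finset.card_filter_le _ _)
  rw [Real.exp_neg, inv_le_iff_one_le_mul₀ (Real.exp_pos _)]
  refine le_of_mul_le_mul_right ?_ hfarpos
  calc 1 * far x₀
      ≤ Real.exp τ * (r / R) ^ k * far x₀ * Real.exp (η * (farRoots z s x₀ r).card) := by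
        rwa [one_mul]
    _ ≤ Real.exp τ * (r / R) ^ k * far x₀ * Real.exp (η * s.card) := by gcongr
    _ = (r / R) ^ k * Real.exp (τ + η * s.card) * far x₀ := by rw [Real.exp_add]; ring

theorem rootProd_nearRoots_le_of_rootProd_le {η σ x : ℝ} (hη : 0 ≤ η) (hr : 0 ≤ r)
    (hx : |x - x₀| ≤ (1 - Real.exp (-η)) * r)
    (hsmall : rootProd z s x ≤ Real.exp (-σ) * rootProd z s x₀) :
    rootProd z (nearRoots z s x₀ r) x ≤
      Real.exp (η * s.card - σ) * r ^ (nearRoots z s x₀ r).card := by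
  have hfarpos := rootProd_farRoots_pos (z := z) (s := s) (x₀ := x₀) hr
  have hfar := exp_mul_rootProd_farRoots_le (z := z) (s := s) hη hx
  set near := rootProd z (nearRoots z s x₀ r)
  set far := rootProd z (farRoots z s x₀ r)
  refine le_of_mul_le_mul_right ?_ (mul_pos (Real.exp_pos (-(η * s.card))) hfarpos)
  calc near x * (Real.exp (-(η * s.card)) * far x₀)
      ≤ near x * far x := mul_le_mul_of_nonneg_left hfar (rootProd_nonneg _)
    _ = rootProd z s x := rootProd_nearRoots_mul_farRoots x
    _ ≤ Real.exp (-σ) * (near x₀ * far x₀) := by rwa [rootProd_nearRoots_mul_farRoots]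
    _ ≤ Real.exp (-σ) * (r ^ (nearRoots z s x₀ r).card * far x₀) := by
        gcongr
        exact rootProd_nearRoots_le
    _ = Real.exp (η * s.card - σ) * r ^ (nearRoots z s x₀ r).card *
          (Real.exp (-(η * s.card)) * far x₀) := by
        rw [show -σ = (η * s.card - σ) + -(η * s.card) by ring, Real.exp_add]
        ring

theorem exp_le_rpow_pow_card_nearRoots {R η τ σ ω : ℝ} (hx₀ : x₀ ∈ Icc (-1 : ℝ) 1) (hr : 0 < r)
    (hrR : r ≤ R) (hη : 0 ≤ η) (hR : 2 * R * (Real.cosh η + 1) ≤ Real.cosh η - 1)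
    (hω : η * s.card ≤ ω) (hωσ : ω ≤ σ) (hτω : 0 < τ + ω)
    (hlarge : ∀ y ∈ Icc (-1 : ℝ) 1, Real.exp (-τ) * rootProd z s y ≤ rootProd z s x₀) :
    Real.exp (ω - σ) ≤ ((r / R) ^ ((σ - ω) / (τ + ω))) ^ (nearRoots z s x₀ r).card := by
  have hratio : 0 ≤ r / R := (div_pos hr (hr.trans_le hrR)).le
  have hτ : Real.exp (-(τ + ω)) ≤ (r / R) ^ (nearRoots z s x₀ r).card :=
    (Real.exp_le_exp.2 (by linarith)).trans (exp_le_pow_card_nearRoots hx₀ hr hrR hη hR hlarge)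
  calc Real.exp (ω - σ) = Real.exp (-(τ + ω)) ^ ((σ - ω) / (τ + ω)) := by
        rw [← Real.exp_mul, neg_mul, mul_div_cancel₀ _ hτω.ne', neg_sub]
    _ ≤ ((r / R) ^ (nearRoots z s x₀ r).card) ^ ((σ - ω) / (τ + ω)) :=
        Real.rpow_le_rpow (Real.exp_pos _).le hτ (div_nonneg (sub_nonneg.2 hωσ) hτω.le)
    _ = ((r / R) ^ ((σ - ω) / (τ + ω))) ^ (nearRoots z s x₀ r).card := by
        rw [← Real.rpow_natCast_mul hratio, mul_comm, Real.rpow_mul_natCast hratio]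

theorem volume_rootProd_le_near_le {R η τ σ ω : ℝ} (hx₀ : x₀ ∈ Icc (-1 : ℝ) 1) (hr : 0 < r)
    (hrR : r ≤ R) (hη : 0 ≤ η) (hR : 2 * R * (Real.cosh η + 1) ≤ Real.cosh η - 1)
    (hω : η * s.card ≤ ω) (hωσ : ω < σ) (hτω : 0 < τ + ω)
    (hlarge : ∀ y ∈ Icc (-1 : ℝ) 1, Real.exp (-τ) * rootProd z s y ≤ rootProd z s x₀) :
    volume {x : ℝ | |x - x₀| ≤ (1 - Real.exp (-η)) * r ∧
        rootProd z s x ≤ Real.exp (-σ) * rootProd z s x₀} ≤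
      ENNReal.ofReal (16 * (r * (r / R) ^ ((σ - ω) / (τ + ω)))) := by
  set S := {x : ℝ | |x - x₀| ≤ (1 - Real.exp (-η)) * r ∧
    rootProd z s x ≤ Real.exp (-σ) * rootProd z s x₀}
  have hratio : 0 < r / R := div_pos hr (hr.trans_le hrR)
  have hnear : ∀ x ∈ S, rootProd z (nearRoots z s x₀ r) x ≤
      Real.exp (ω - σ) * r ^ (nearRoots z s x₀ r).card := fun x hx => by
    refine (rootProd_nearRoots_le_of_rootProd_le hη hr.le hx.1 hx.2).trans ?_
    gcongr
  rcases (nearRoots z s x₀ r).eq_empty_or_nonempty with hempty | hnonempty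
  · have hS : S = ∅ := eq_empty_of_forall_notMem fun x hx => by
      have hone := hnear x hx
      rw [hempty, rootProd, Finset.prod_empty, Finset.card_empty, pow_zero, mul_one] at hone
      exact (Real.exp_lt_one_iff.2 (sub_neg.2 hωσ)).not_ge hone
    rw [hS, measure_empty]
    exact bot_le
  · refine (measure_mono fun x hx => (hnear x hx).trans ?_).trans
      (volume_rootProd_le_pow z hnonempty (by positivity))
    rw [mul_pow, mul_comm]
    exact mul_le_mul_of_nonneg_left
      (exp_le_rpow_pow_card_nearRoots hx₀ hr hrR hη hR hω hωσ.le hτω hlarge) (by positivity)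

end NearAndFarRoots

section Components

variable {X : Type*} [TopologicalSpace X]

theorem closure_connectedComponentIn_inter_subset {U : Set X} (x : X) :
    closure (connectedComponentIn U x) ∩ U ⊆ connectedComponentIn U x := by
  rintro y ⟨hy, hyU⟩
  obtain ⟨w, hw⟩ := closure_nonempty_iff.1 ⟨y, hy⟩
  have hpre : IsPreconnected (insert y (connectedComponentIn U x)) :=
    isPreconnected_connectedComponentIn.subset_closure (subset_insert _ _)
      (insert_subset hy subset_closure)
  rw [connectedComponentIn_eq hw]
  exact hpre.subset_connectedComponentIn (mem_insert_of_mem _ hw)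
    (insert_subset hyU (connectedComponentIn_subset _ _)) (mem_insert _ _)

variable [LocallyConnectedSpace X]

theorem exists_mem_closure_connectedComponentIn {D U : Set X} (hD : IsPreconnected D)
    (hU : IsOpen U) (hUD : U ⊂ D) {x : X} (hx : x ∈ U) :
    ∃ x₀ ∈ D \ U, x₀ ∈ closure (connectedComponentIn U x) := by
  by_contra! hnone
  refine hUD.2 ((hD.subset_of_closure_inter_subset hU.connectedComponentIn
    ⟨x, hUD.1 hx, mem_connectedComponentIn hx⟩ ?_).trans (connectedComponentIn_subset U x))
  rintro y ⟨hy, hyD⟩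
  exact closure_connectedComponentIn_inter_subset x
    ⟨hy, by_contra fun hyU => hnone y ⟨hyD, hyU⟩ hy⟩

theorem measure_le_mul_of_forall_connectedComponentIn [TopologicalSpace.SeparableSpace X]
    [MeasurableSpace X] [OpensMeasurableSpace X] {μ : Measure X} {U A : Set X} (hU : IsOpen U)
    (hAU : A ⊆ U) {β : ENNReal}
    (hle : ∀ x ∈ U, μ (A ∩ connectedComponentIn U x) ≤ β * μ (connectedComponentIn U x)) :
    μ A ≤ β * μ U := by
  set components : Set (Set X) := (fun x => connectedComponentIn U x) '' U
  have hdisjoint : components.PairwiseDisjoint id := by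
    rintro _ ⟨x, -, rfl⟩ _ ⟨y, -, rfl⟩ hne
    refine Set.disjoint_left.2 fun w hwx hwy => hne ?_
    exact (connectedComponentIn_eq hwx).trans (connectedComponentIn_eq hwy).symm
  have hopen : ∀ C ∈ components, IsOpen C := by
    rintro _ ⟨x, -, rfl⟩
    exact hU.connectedComponentIn
  have hcountable : components.Countable := hdisjoint.countable_of_isOpen hopen (by
    rintro _ ⟨x, hx, rfl⟩
    exact ⟨x, mem_connectedComponentIn hx⟩)
  calc μ A ≤ μ (⋃ C ∈ components, A ∩ C) := measure_mono fun x hx =>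
        mem_biUnion (mem_image_of_mem _ (hAU hx)) ⟨hx, mem_connectedComponentIn (hAU hx)⟩
    _ ≤ ∑' C : components, μ (A ∩ C) := measure_biUnion_le _ hcountable _
    _ ≤ ∑' C : components, β * μ C := ENNReal.tsum_le_tsum (by
        rintro ⟨_, x, hx, rfl⟩
        exact hle x hx)
    _ = β * μ (⋃ C ∈ components, C) := by
        rw [ENNReal.tsum_mul_left]
        exact congrArg _ (measure_biUnion hcountable hdisjoint
          fun C hC => (hopen C hC).measurableSet).symm
    _ ≤ β * μ U := by
        gcongr
        refine iUnion₂_subset ?_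
        rintro _ ⟨x, -, rfl⟩
        exact connectedComponentIn_subset _ _

end Components

theorem abs_sub_le_volume_of_mem_closure {C : Set ℝ} (hC : IsPreconnected C)
    (hfin : volume C ≠ ⊤) {x y : ℝ} (hx : x ∈ C) (hy : y ∈ closure C) :
    |x - y| ≤ volume.real C := by
  refine closure_minimal (t := {w | |x - w| ≤ volume.real C}) (fun w hw => ?_)
    (isClosed_le (by fun_prop) continuous_const) hy
  rw [mem_ofPred_eq, abs_sub_comm, ← Real.volume_real_interval]
  exact measureReal_mono (hC.ordConnected.uIcc_subset hx hw) hfin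

theorem volume_real_connectedComponentIn_pos {U : Set ℝ} (hU : IsOpen U) (hfin : volume U ≠ ⊤)
    {x : ℝ} (hx : x ∈ U) : 0 < volume.real (connectedComponentIn U x) :=
  ENNReal.toReal_pos
    (hU.connectedComponentIn.measure_pos _ ⟨x, mem_connectedComponentIn hx⟩).ne'
    (measure_ne_top_of_subset (connectedComponentIn_subset U x) hfin)

theorem exists_forall_abs_sub_le_volume_connectedComponentIn {D U : Set ℝ} (hD : IsPreconnected D)
    (hU : IsOpen U) (hUD : U ⊂ D) (hfin : volume U ≠ ⊤) {x : ℝ} (hx : x ∈ U) :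
    ∃ x₀ ∈ D \ U, ∀ y ∈ connectedComponentIn U x,
      |y - x₀| ≤ volume.real (connectedComponentIn U x) := by
  obtain ⟨x₀, hx₀, hclosure⟩ := exists_mem_closure_connectedComponentIn hD hU hUD hx
  exact ⟨x₀, hx₀, fun y hy => abs_sub_le_volume_of_mem_closure isPreconnected_connectedComponentIn
    (measure_ne_top_of_subset (connectedComponentIn_subset U x) hfin) hy hclosure⟩

section SmallValues

open scoped Polynomial

variable {P : ℝ[X]}

theorem exists_abs_eval_eq_rootProd (P : ℝ[X]) :
    ∃ (ι : Type) (z : ι → ℂ) (s : Finset ι), s.card ≤ P.natDegree ∧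
      ∀ x, |P.eval x| = |P.leadingCoeff| * rootProd z s x := by
  refine ⟨(P.aroots ℂ).ToType, fun i => i.1, Finset.univ, ?_, fun x => ?_⟩
  · rw [Finset.card_univ, Multiset.card_coe]
    exact (Polynomial.card_roots' _).trans Polynomial.natDegree_map_le
  · have hlinear : ((P.aroots ℂ).map ((x : ℂ) - ·)).prod = ∏ i : P.aroots ℂ, ((x : ℂ) - i.1) := by
      rw [← Multiset.map_univ, Finset.prod_eq_multiset_prod]
    have hfactor := congrArg norm
      ((IsAlgClosed.splits (P.map (algebraMap ℝ ℂ))).aeval_eq_prod_aroots (x : ℂ))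
    rwa [← Complex.coe_algebraMap, Polynomial.aeval_algebraMap_apply_eq_algebraMap_eval, norm_mul,
      norm_algebraMap', norm_algebraMap', Complex.coe_algebraMap, hlinear, norm_prod] at hfactor

theorem abs_eval_le_supNorm (P : ℝ[X]) {x : ℝ} (hx : x ∈ Icc (-1 : ℝ) 1) :
    |P.eval x| ≤ supNorm P :=
  le_csSup (isCompact_Icc.image P.continuous.abs).bddAbove (mem_image_of_mem _ hx)

theorem supNorm_pos (hP : P ≠ 0) : 0 < supNorm P := by
  by_contra! hnonpos
  refine hP (P.eq_zero_of_infinite_isRoot ((Icc_infinite (by norm_num : (-1 : ℝ) < 1)).mono ?_))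
  exact fun x hx => abs_nonpos_iff.1 ((abs_eval_le_supNorm P hx).trans hnonpos)

theorem volume_sublevelSet_ne_top (P : ℝ[X]) (n : ℕ) (δ : ℝ) : volume (sublevelSet P n δ) ≠ ⊤ :=
  measure_ne_top_of_subset (fun _ hx => hx.1) isCompact_Icc.measure_ne_top

theorem volume_abs_eval_le_near_le (hP : P ≠ 0) {x₀ r R η τ σ ω : ℝ} (hx₀ : x₀ ∈ Icc (-1 : ℝ) 1)
    (hr : 0 < r) (hrR : r ≤ R) (hη : 0 ≤ η)
    (hR : 2 * R * (Real.cosh η + 1) ≤ Real.cosh η - 1) (hω : η * P.natDegree ≤ ω) (hωσ : ω < σ)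
    (hτω : 0 < τ + ω) (hlarge : Real.exp (-τ) * supNorm P ≤ |P.eval x₀|) :
    volume {x : ℝ | |x - x₀| ≤ (1 - Real.exp (-η)) * r ∧
        |P.eval x| ≤ Real.exp (-σ) * |P.eval x₀|} ≤
      ENNReal.ofReal (16 * (r * (r / R) ^ ((σ - ω) / (τ + ω)))) := by
  obtain ⟨ι, z, s, hcard, habs⟩ := exists_abs_eval_eq_rootProd P
  have hlead : 0 < |P.leadingCoeff| := abs_pos.2 (Polynomial.leadingCoeff_ne_zero.2 hP)
  simp only [habs, mul_left_comm _ |P.leadingCoeff|, mul_le_mul_iff_right₀ hlead]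
  refine volume_rootProd_le_near_le hx₀ hr hrR hη hR (le_trans (by gcongr) hω) hωσ hτω
    fun y hy => le_of_mul_le_mul_left ?_ hlead
  rw [mul_left_comm, ← habs, ← habs]
  refine le_trans ?_ hlarge
  gcongr
  exact abs_eval_le_supNorm P hy

theorem volume_inter_connectedComponentIn_le (hP : P ≠ 0) {R η τ σ ω : ℝ} (hη : 0 < η)
    (hR : 2 * R * (Real.cosh η + 1) ≤ Real.cosh η - 1) (hω : η * P.natDegree ≤ ω) (hωσ : ω < σ)
    (hτω : 0 < τ + ω) {U : Set ℝ} (hU : IsOpen U) (hUI : U ⊂ Ioo (-1) 1)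
    (hlarge : ∀ y ∈ Ioo (-1) 1 \ U, Real.exp (-τ) * supNorm P ≤ |P.eval y|)
    (hsmall : volume.real U ≤ (1 - Real.exp (-η)) * R) {x : ℝ} (hx : x ∈ U) :
    volume ({y | |P.eval y| ≤ Real.exp (-(τ + σ)) * supNorm P} ∩ connectedComponentIn U x) ≤
      ENNReal.ofReal (16 / (1 - Real.exp (-η)) *
        (volume.real U / (1 - Real.exp (-η)) / R) ^ ((σ - ω) / (τ + ω))) *
      volume (connectedComponentIn U x) := by
  have hUfin : volume U ≠ ⊤ := measure_ne_top_of_subset hUI.subset measure_Ioo_lt_top.ne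
  have hsub := connectedComponentIn_subset U x
  have hℓU := measureReal_mono hsub hUfin
  have hℓ := volume_real_connectedComponentIn_pos hU hUfin hx
  have hvol := ofReal_measureReal (measure_ne_top_of_subset hsub hUfin)
  obtain ⟨x₀, hx₀, hclose⟩ :=
    exists_forall_abs_sub_le_volume_connectedComponentIn isPreconnected_Ioo hU hUI hUfin hx
  set q := 1 - Real.exp (-η) with hqdef
  set ℓ := volume.real (connectedComponentIn U x)
  have hq : 0 < q := sub_pos.2 (Real.exp_lt_one_iff.2 (neg_lt_zero.2 hη))
  have hℓR : ℓ / q ≤ R := (div_le_iff₀' hq).2 (hℓU.trans hsmall)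
  have hRpos : 0 < R := (div_pos hℓ hq).trans_le hℓR
  have : 0 ≤ (σ - ω) / (τ + ω) := (div_pos (sub_pos.2 hωσ) hτω).le
  have hbound := volume_abs_eval_le_near_le hP (Ioo_subset_Icc_self hx₀.1) (div_pos hℓ hq)
    hℓR hη.le hR hω hωσ hτω (hlarge x₀ hx₀)
  rw [← hqdef, mul_div_cancel₀ _ hq.ne'] at hbound
  have hshift : Real.exp (-(τ + σ)) * supNorm P ≤ Real.exp (-σ) * |P.eval x₀| := by
    rw [add_comm, neg_add, Real.exp_add, mul_assoc]
    exact mul_le_mul_of_nonneg_left (hlarge x₀ hx₀) (Real.exp_pos _).le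
  calc volume ({y | |P.eval y| ≤ Real.exp (-(τ + σ)) * supNorm P} ∩ connectedComponentIn U x)
      ≤ ENNReal.ofReal (16 * (ℓ / q * (ℓ / q / R) ^ ((σ - ω) / (τ + ω)))) :=
        hbound.trans' (measure_mono fun y hy => ⟨hclose y hy.2, hy.1.trans hshift⟩)
    _ = ENNReal.ofReal (16 / q * (ℓ / q / R) ^ ((σ - ω) / (τ + ω))) * ENNReal.ofReal ℓ := by
        rw [← ENNReal.ofReal_mul (by positivity)]
        ring_nf
    _ ≤ ENNReal.ofReal (16 / q * (volume.real U / q / R) ^ ((σ - ω) / (τ + ω))) *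
          volume (connectedComponentIn U x) := by
        rw [hvol]
        gcongr

theorem volume_inter_le_mul_of_isOpen (hP : P ≠ 0) {R η τ σ ω : ℝ} (hη : 0 < η) (hR₀ : 0 ≤ R)
    (hR : 2 * R * (Real.cosh η + 1) ≤ Real.cosh η - 1) (hω : η * P.natDegree ≤ ω) (hωσ : ω < σ)
    (hτω : 0 < τ + ω) {U : Set ℝ} (hU : IsOpen U) (hUI : U ⊆ Ioo (-1) 1)
    (hlarge : ∀ y ∈ Ioo (-1) 1 \ U, Real.exp (-τ) * supNorm P ≤ |P.eval y|)
    (hsmall : volume.real U ≤ (1 - Real.exp (-η)) * R) :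
    volume.real ({y | |P.eval y| ≤ Real.exp (-(τ + σ)) * supNorm P} ∩ U) ≤
      16 / (1 - Real.exp (-η)) *
        (volume.real U / (1 - Real.exp (-η)) / R) ^ ((σ - ω) / (τ + ω)) * volume.real U := by
  have hq : 0 < 1 - Real.exp (-η) := sub_pos.2 (Real.exp_lt_one_iff.2 (neg_lt_zero.2 hη))
  have hne : U ≠ Ioo (-1) 1 := fun heq => by
    rw [heq, Real.volume_real_Ioo_of_le (by norm_num)] at hsmall
    nlinarith [Real.exp_pos (-η), Real.cosh_pos η]
  have hsum := measure_le_mul_of_forall_connectedComponentIn hU inter_subset_right fun x hx =>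
    (volume_inter_connectedComponentIn_le hP hη hR hω hωσ hτω hU (hUI.ssubset_of_ne hne)
      hlarge hsmall hx).trans' (measure_mono (inter_subset_inter_left _ inter_subset_left))
  have hfin : volume U ≠ ⊤ := measure_ne_top_of_subset hUI measure_Ioo_lt_top.ne
  refine (ENNReal.toReal_mono (ENNReal.mul_ne_top ENNReal.ofReal_ne_top hfin) hsum).trans_eq ?_
  rw [ENNReal.toReal_mul, ENNReal.toReal_ofReal (by positivity), measureReal_def]

theorem sublevelSet_ae_eq_inter (hP : P ≠ 0) {n : ℕ} (hn : 0 < n) {a b : ℝ} (hab : a < b) :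
    sublevelSet P n b =ᵐ[volume] ({x | |P.eval x| ≤ Real.exp (-b * n) * supNorm P} ∩
      (Ioo (-1) 1 ∩ {x | |P.eval x| < Real.exp (-a * n) * supNorm P}) : Set ℝ) := by
  have hlevel : Real.exp (-b * n) * supNorm P < Real.exp (-a * n) * supNorm P := by
    have := supNorm_pos hP
    gcongr
  have hinter : ({x | |P.eval x| ≤ Real.exp (-b * n) * supNorm P} ∩
      (Ioo (-1) 1 ∩ {x | |P.eval x| < Real.exp (-a * n) * supNorm P}) : Set ℝ) =
      Ioo (-1) 1 ∩ {x | |P.eval x| ≤ Real.exp (-b * n) * supNorm P} :=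
    Set.ext fun x => ⟨fun h => ⟨h.2.1, h.1⟩, fun h => ⟨h.2, h.1, h.2.trans_lt hlevel⟩⟩
  rw [hinter]
  exact Ioo_ae_eq_Icc.symm.inter (ae_eq_refl _)

theorem volume_sublevelSet_le_mul (hP : P ≠ 0) {n : ℕ} (hn : 0 < n) (hdeg : P.natDegree ≤ n)
    {R η a b : ℝ} (hR₀ : 0 ≤ R) (ha : 0 ≤ a) (hη : 0 < η) (hab : a + η < b)
    (hR : 2 * R * (Real.cosh η + 1) ≤ Real.cosh η - 1)
    (hsmall : volume.real (sublevelSet P n a) ≤ (1 - Real.exp (-η)) * R) :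
    volume.real (sublevelSet P n b) ≤ 16 / (1 - Real.exp (-η)) *
        (volume.real (sublevelSet P n a) / (1 - Real.exp (-η)) / R) ^ ((b - a - η) / (a + η)) *
      volume.real (sublevelSet P n a) := by
  set U : Set ℝ := Ioo (-1) 1 ∩ {x | |P.eval x| < Real.exp (-a * n) * supNorm P}
  have hn' : (0 : ℝ) < n := Nat.cast_pos.2 hn
  have hq : 0 < 1 - Real.exp (-η) := sub_pos.2 (Real.exp_lt_one_iff.2 (neg_lt_zero.2 hη))
  have hβ : 0 ≤ (b - a - η) / (a + η) := div_nonneg (by linarith) (by linarith)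
  have hUopen : IsOpen U := isOpen_Ioo.inter (isOpen_lt P.continuous.abs continuous_const)
  have hUE : volume.real U ≤ volume.real (sublevelSet P n a) :=
    measureReal_mono (fun x hx => ⟨Ioo_subset_Icc_self hx.1, hx.2.le⟩)
      (volume_sublevelSet_ne_top P n a)
  have hbound := volume_inter_le_mul_of_isOpen hP (τ := a * n) (σ := (b - a) * n) (ω := η * n)
    hη hR₀ hR (by gcongr) (by gcongr; linarith) (by positivity)
    hUopen inter_subset_left (fun y hy => ?_) (hUE.trans hsmall)
  · rw [← sub_mul, ← add_mul, ← add_mul, mul_div_mul_right _ _ hn'.ne', add_sub_cancel,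
      ← neg_mul, ← measureReal_congr (sublevelSet_ae_eq_inter hP hn (by linarith))] at hbound
    exact hbound.trans (by gcongr)
  · rw [← neg_mul]
    exact not_lt.1 fun hlt => hy.2 ⟨hy.1, hlt⟩

theorem volume_sublevelSet_le_rpow {η : ℝ} (hη : 0 < η) :
    ∃ C, 1 ≤ C ∧ ∀ P : ℝ[X], P ≠ 0 → ∀ n : ℕ, 0 < n → P.natDegree ≤ n →
      ∀ a b : ℝ, 0 ≤ a → a + η < b → C * volume.real (sublevelSet P n a) ≤ 1 →
        volume.real (sublevelSet P n b) ≤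
          (C * volume.real (sublevelSet P n a)) ^ (b / (a + η)) := by
  set q := 1 - Real.exp (-η)
  set R := (Real.cosh η - 1) / (2 * (Real.cosh η + 1)) with hRdef
  have hqpos : 0 < q := sub_pos.2 (Real.exp_lt_one_iff.2 (neg_lt_zero.2 hη))
  have hq1 : q ≤ 1 := sub_le_self _ (Real.exp_pos _).le
  have hcosh := Real.one_lt_cosh.2 hη.ne'
  have hRpos : 0 < R := div_pos (by linarith) (by linarith)
  have hR : 2 * R * (Real.cosh η + 1) = Real.cosh η - 1 := by
    rw [hRdef]
    field_simp
  have hR1 : R ≤ 1 := by nlinarith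
  have hqR : q * R ≤ 1 := mul_le_one₀ hq1 hRpos.le hR1
  refine ⟨16 / (q * R), (one_le_div (by positivity)).2 (by linarith), ?_⟩
  intro P hP n hn hdeg a b ha hab hsmall
  set Λ := volume.real (sublevelSet P n a)
  have hΛ : 0 ≤ Λ := measureReal_nonneg
  have hβ : 0 ≤ (b - a - η) / (a + η) := div_nonneg (by linarith) (by linarith)
  have hbase : Λ / q / R ≤ 16 / (q * R) * Λ := by
    rw [div_div, div_mul_eq_mul_div]
    gcongr
    linarith
  have hexp : b / (a + η) = (b - a - η) / (a + η) + 1 := by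
    have : a + η ≠ 0 := by positivity
    field_simp
    ring
  have hΛsmall : Λ ≤ q * R := by
    rw [div_mul_eq_mul_div, div_le_one (by positivity)] at hsmall
    linarith
  calc volume.real (sublevelSet P n b)
      ≤ 16 / q * (Λ / q / R) ^ ((b - a - η) / (a + η)) * Λ :=
        volume_sublevelSet_le_mul hP hn hdeg hRpos.le ha hη hab hR.le hΛsmall
    _ ≤ 16 / (q * R) * (16 / (q * R) * Λ) ^ ((b - a - η) / (a + η)) * Λ := by
        gcongr
        exact mul_le_of_le_one_right hqpos.le hR1
    _ = (16 / (q * R) * Λ) ^ (b / (a + η)) := by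
        rw [hexp, Real.rpow_add_one' (by positivity) (by positivity)]
        ring

theorem comparison_claim_general {δ₀ ε : ℝ} (hδ₀ : 0 < δ₀) (hε : 0 < ε) :
    ∃ κ : ℝ, 0 < κ ∧
      ∀ n : ℕ, 0 < n → ∀ P : ℝ[X], P ≠ 0 → P.natDegree ≤ n →
      ∀ δ : ℝ, δ₀ ≤ δ → ∀ c : ℝ, 0 ≤ c → c + ε < 1 →
      volume.real (sublevelSet P n δ) ≤ κ →
      volume.real (sublevelSet P n δ) ^ (c + ε) ≤ volume.real (sublevelSet P n (c * δ)) := by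
  obtain ⟨C, hC, hpower⟩ := volume_sublevelSet_le_rpow (by positivity : 0 < ε / 2 * δ₀)
  refine ⟨min 1 (C⁻¹ ^ (2 / ε)), by positivity, ?_⟩
  intro n hn P hP hdeg δ hδ c hc hcε hκ
  have hδpos : 0 < δ := hδ₀.trans_le hδ
  have hη : ε / 2 * δ₀ ≤ ε / 2 * δ := by gcongr
  set lam := volume.real (sublevelSet P n δ)
  set Λ := volume.real (sublevelSet P n (c * δ))
  have hlam : 0 ≤ lam := measureReal_nonneg
  have : 0 ≤ Λ := measureReal_nonneg
  have hlam1 : lam ≤ 1 := hκ.trans (min_le_left _ _)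
  have hroot : lam ^ (c + ε / 2) ≤ C * Λ := by
    rcases le_total 1 (C * Λ) with hlarge | hsmall
    · exact (Real.rpow_le_one hlam hlam1 (by positivity)).trans hlarge
    · have := hpower P hP n hn hdeg (c * δ) δ (by positivity) (by nlinarith) hsmall
      have hexp : (c + ε / 2)⁻¹ ≤ δ / (c * δ + ε / 2 * δ₀) := by
        rw [inv_eq_one_div, div_le_div_iff₀ (by positivity) (by positivity)]
        linarith
      rw [← Real.le_rpow_inv_iff_of_pos hlam (by positivity) (by positivity)]
      exact this.trans (Real.rpow_le_rpow_of_exponent_ge' (by positivity) hsmall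
        (by positivity) hexp)
  have hfactor : lam ^ (ε / 2) ≤ C⁻¹ := by
    rw [← inv_div, Real.rpow_inv_le_iff_of_pos hlam (by positivity) (by positivity)]
    exact hκ.trans (min_le_right _ _)
  calc lam ^ (c + ε) = lam ^ (c + ε / 2) * lam ^ (ε / 2) := by
        rw [← Real.rpow_add_of_nonneg hlam (by positivity) (by positivity), add_assoc, add_halves]
    _ ≤ C * Λ * C⁻¹ := by gcongr
    _ = Λ := by field_simp

end SmallValues

theorem comparison_claim :
    ∀ δ₀ : ℝ, 0 < δ₀ → ∀ c₀ : ℝ, 0 < c₀ → c₀ < 1 → ∀ ε : ℝ, 0 < ε →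
    ∃ κ : ℝ, 0 < κ ∧
      ∀ n : ℕ, 0 < n → ∀ P : Polynomial ℝ, P ≠ 0 → P.natDegree ≤ n →
      ∀ δ : ℝ, δ₀ ≤ δ → ∀ c : ℝ, c₀ ≤ c → c < 1 → ε < (1 - c) / (2 - c) →
      (volume (sublevelSet P n δ)).toReal ≤ κ →
      (volume (sublevelSet P n (c * δ))).toReal ≥
        ((volume (sublevelSet P n δ)).toReal) ^ (1 / (2 - c) + ε) := by
  intro δ₀ hδ₀ c₀ hc₀ _ ε hε
  obtain ⟨κ, hκ, hgeneral⟩ := comparison_claim_general hδ₀ hε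
  refine ⟨min 1 κ, by positivity, fun n hn P hP hdeg δ hδ c hc hc1 hεc hsmall => ?_⟩
  have hcpos : 0 < c := hc₀.trans_le hc
  have hcε : c + ε < 1 := by
    have := div_le_self (sub_nonneg.2 hc1.le) (by linarith : 1 ≤ 2 - c)
    linarith
  have hc_le : c ≤ 1 / (2 - c) := by
    rw [le_div_iff₀ (by linarith)]
    nlinarith [sq_nonneg (1 - c)]
  calc (volume (sublevelSet P n δ)).toReal ^ (1 / (2 - c) + ε)
      ≤ (volume (sublevelSet P n δ)).toReal ^ (c + ε) :=
        Real.rpow_le_rpow_of_exponent_ge' ENNReal.toReal_nonneg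
          (hsmall.trans (min_le_left _ _)) (by positivity) (by gcongr)
    _ ≤ (volume (sublevelSet P n (c * δ))).toReal :=
        hgeneral n hn P hP hdeg δ hδ c hcpos.le hcε (hsmall.trans (min_le_right _ _))
end
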